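/- arXiv:math/0511730 — 2 statements merged into one kernel-verified Lean document; each statement's English description precedes it below -/
import Mathlib

section
/- In the monoid T, for all 1 ≤ i ≤ n−3 the relation σ_{i+2}·σ_{i+1}·θ_i·ϑ_{i+2}·ϑ_{i+3} = σ_i·σ_{i+1}·ϑ_i·θ_i·θ_{i+2}·ϑ_{i+2} holds. -/
/-!
The presentation of the partial Brauer monoid `P𝔅_n` from Kudryavtseva–Mazorchuk,
Section 5.

Generators: `Sum.inl i` represents `σ_{i+1}` and `Sum.inr (Sum.inl i)` represents
`θ_{i+1}` for `i : Fin (n-1)`, while `Sum.inr (Sum.inr j)` represents `ϑ_{j+1}`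
for `j : Fin n` (the paper's indices are `i.val + 1`, `j.val + 1`).
-/

/-- Generator type: `σ_{i+1}`, `θ_{i+1}` (`i : Fin (n-1)`) and `ϑ_{j+1}` (`j : Fin n`). -/
abbrev PBGen (n : ℕ) := Fin (n - 1) ⊕ (Fin (n - 1) ⊕ Fin n)

/-- The word `σ_{i+1}` in the free monoid. -/
def fσ {n : ℕ} (i : Fin (n - 1)) : FreeMonoid (PBGen n) := FreeMonoid.of (Sum.inl i)

/-- The word `θ_{i+1}` in the free monoid. -/
def fθ {n : ℕ} (i : Fin (n - 1)) : FreeMonoid (PBGen n) := FreeMonoid.of (Sum.inr (Sum.inl i))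

/-- The word `ϑ_{j+1}` in the free monoid. -/
def fϑ {n : ℕ} (j : Fin n) : FreeMonoid (PBGen n) := FreeMonoid.of (Sum.inr (Sum.inr j))

/-- The point `i` of `{1, …, n}` (0-based: `i.val`). -/
def lo {n : ℕ} (i : Fin (n - 1)) : Fin n := ⟨i.1, by have := i.2; omega⟩

/-- The point `i + 1` of `{1, …, n}` (0-based: `i.val + 1`). -/
def hi {n : ℕ} (i : Fin (n - 1)) : Fin n := ⟨i.1 + 1, by have := i.2; omega⟩

/-- The defining relations of the presentation of the partial Brauer monoid `P𝔅_n`: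
the Brauer relations for `σ, θ`, the symmetric-inverse-monoid relations for `σ, ϑ`,
and the mixed relations for `θ, ϑ`. -/
inductive PBRel (n : ℕ) : FreeMonoid (PBGen n) → FreeMonoid (PBGen n) → Prop
  | sigma_sq (i) : PBRel n (fσ i * fσ i) 1
  | sigma_comm (i j) (h : 1 < Nat.dist i.1 j.1) : PBRel n (fσ i * fσ j) (fσ j * fσ i)
  | braid (i j) (h : Nat.dist i.1 j.1 = 1) :
      PBRel n (fσ i * fσ j * fσ i) (fσ j * fσ i * fσ j)
  | theta_idem (i) : PBRel n (fθ i * fθ i) (fθ i)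
  | theta_comm (i j) (h : 1 < Nat.dist i.1 j.1) : PBRel n (fθ i * fθ j) (fθ j * fθ i)
  | theta_theta_theta (i j) (h : Nat.dist i.1 j.1 = 1) : PBRel n (fθ i * fθ j * fθ i) (fθ i)
  | theta_sigma (i) : PBRel n (fθ i * fσ i) (fθ i)
  | sigma_theta (i) : PBRel n (fσ i * fθ i) (fθ i)
  | theta_sigma_comm (i j) (h : 1 < Nat.dist i.1 j.1) : PBRel n (fθ i * fσ j) (fσ j * fθ i)
  | sigma_theta_theta (i j) (h : Nat.dist i.1 j.1 = 1) :
      PBRel n (fσ i * fθ j * fθ i) (fσ j * fθ i)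
  | theta_theta_sigma (i j) (h : Nat.dist i.1 j.1 = 1) :
      PBRel n (fθ i * fθ j * fσ i) (fθ i * fσ j)
  | v_idem (j) : PBRel n (fϑ j * fϑ j) (fϑ j)
  | v_comm (j j') (h : j ≠ j') : PBRel n (fϑ j * fϑ j') (fϑ j' * fϑ j)
  | sigma_v (i) : PBRel n (fσ i * fϑ (lo i)) (fϑ (hi i) * fσ i)
  | sigma_v_comm (i j) (h : j ≠ lo i) (h' : j ≠ hi i) : PBRel n (fσ i * fϑ j) (fϑ j * fσ i)
  | v_sigma_v (i) : PBRel n (fϑ (lo i) * fσ i * fϑ (lo i)) (fϑ (lo i) * fϑ (hi i))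
  | theta_v_comm (i j) (h : j ≠ lo i) (h' : j ≠ hi i) : PBRel n (fθ i * fϑ j) (fϑ j * fθ i)
  | theta_v (i) : PBRel n (fθ i * fϑ (lo i)) (fθ i * fϑ (hi i))
  | theta_vv (i) : PBRel n (fθ i * fϑ (lo i)) (fθ i * fϑ (lo i) * fϑ (hi i))
  | v_theta (i) : PBRel n (fϑ (lo i) * fθ i) (fϑ (hi i) * fθ i)
  | vv_theta (i) : PBRel n (fϑ (lo i) * fθ i) (fϑ (lo i) * fϑ (hi i) * fθ i)
  | theta_v_theta (i) : PBRel n (fθ i * fϑ (lo i) * fθ i) (fθ i)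
  | v_theta_v (i) : PBRel n (fϑ (lo i) * fθ i * fϑ (lo i)) (fϑ (lo i) * fϑ (hi i))

/-- The monoid `T` given by the presentation above. -/
abbrev PBMonoid (n : ℕ) := PresentedMonoid (PBRel n)

/-- The generator `σ_{i+1}` of `T`. -/
def σP {n : ℕ} (i : Fin (n - 1)) : PBMonoid n := PresentedMonoid.of (PBRel n) (Sum.inl i)

/-- The generator `θ_{i+1}` of `T`. -/
def θP {n : ℕ} (i : Fin (n - 1)) : PBMonoid n :=
  PresentedMonoid.of (PBRel n) (Sum.inr (Sum.inl i))

/-- The generator `ϑ_{j+1}` of `T`. -/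
def ϑP {n : ℕ} (j : Fin n) : PBMonoid n := PresentedMonoid.of (PBRel n) (Sum.inr (Sum.inr j))

theorem pb_mk {n : ℕ} {a b : FreeMonoid (PBGen n)} (h : PBRel n a b) :
    PresentedMonoid.mk (PBRel n) a = PresentedMonoid.mk (PBRel n) b :=
  Quotient.sound (ConGen.Rel.of _ _ h)

/-- Lemma `technicallemma` of Kudryavtseva–Mazorchuk: in `T`, for all `1 ≤ i ≤ n-3`,
`σ_{i+2} σ_{i+1} θ_i ϑ_{i+2} ϑ_{i+3} = σ_i σ_{i+1} ϑ_i θ_i θ_{i+2} ϑ_{i+2}`. -/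
theorem PB_technical_relation (n : ℕ)
    (i i₁ i₂ : Fin (n - 1)) (j₀ j₂ j₃ : Fin n)
    (h₁ : i₁.1 = i.1 + 1) (h₂ : i₂.1 = i.1 + 2)
    (hj₀ : j₀.1 = i.1) (hj₂ : j₂.1 = i.1 + 2) (hj₃ : j₃.1 = i.1 + 3) :
    σP i₂ * σP i₁ * θP i * ϑP j₂ * ϑP j₃ =
      σP i * σP i₁ * ϑP j₀ * θP i * θP i₂ * ϑP j₂ := by
  obtain rfl : j₀ = lo i := Fin.ext hj₀
  obtain rfl : j₂ = lo i₂ := Fin.ext (by simp [lo]; omega)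
  obtain rfl : j₃ = hi i₂ := Fin.ext (by simp [hi]; omega)
  have e : hi i₁ = lo i₂ := Fin.ext (by simp [hi, lo]; omega)
  have e' : hi i = lo i₁ := Fin.ext (by simp [hi, lo]; omega)
  have vtv : ϑP (lo i₂) * θP i₂ * ϑP (lo i₂) = ϑP (lo i₂) * ϑP (hi i₂) :=
    pb_mk (PBRel.v_theta_v i₂)
  have tv : θP i * ϑP (lo i₂) = ϑP (lo i₂) * θP i :=
    pb_mk (PBRel.theta_v_comm i (lo i₂) (by simp [lo, Fin.ext_iff]; omega)
      (by simp [lo, hi, Fin.ext_iff]; omega))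
  have sv2 : σP i₁ * ϑP (lo i₁) = ϑP (lo i₂) * σP i₁ := e ▸ pb_mk (PBRel.sigma_v i₁)
  have sq2 : σP i₁ * σP i₁ = 1 := pb_mk (PBRel.sigma_sq i₁)
  have sv2' : σP i₁ * ϑP (lo i₂) = ϑP (lo i₁) * σP i₁ := by
    calc σP i₁ * ϑP (lo i₂) = σP i₁ * (ϑP (lo i₂) * σP i₁) * σP i₁ := by
          simp only [mul_assoc, sq2, mul_one]
      _ = (σP i₁ * σP i₁) * ϑP (lo i₁) * σP i₁ := by rw [← sv2]; simp only [mul_assoc]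
      _ = _ := by rw [sq2, one_mul]
  have sv3 : σP i₂ * ϑP (lo i₁) = ϑP (lo i₁) * σP i₂ :=
    pb_mk (PBRel.sigma_v_comm i₂ (lo i₁) (by simp [lo, Fin.ext_iff]; omega)
      (by simp [lo, hi, Fin.ext_iff]; omega))
  have sv1 : σP i * ϑP (lo i) = ϑP (lo i₁) * σP i := e' ▸ pb_mk (PBRel.sigma_v i)
  have sv21 : σP i₁ * ϑP (lo i) = ϑP (lo i) * σP i₁ :=
    pb_mk (PBRel.sigma_v_comm i₁ (lo i) (by simp [lo, Fin.ext_iff]; omega)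
      (by simp [lo, hi, Fin.ext_iff]; omega))
  have st1 : σP i * θP i₁ * θP i = σP i₁ * θP i :=
    pb_mk (PBRel.sigma_theta_theta i i₁ (by simp [Nat.dist]; omega))
  have st3 : σP i₂ * θP i₁ * θP i₂ = σP i₁ * θP i₂ :=
    pb_mk (PBRel.sigma_theta_theta i₂ i₁ (by simp [Nat.dist]; omega))
  have ss : σP i * σP i₂ = σP i₂ * σP i :=
    pb_mk (PBRel.sigma_comm i i₂ (by simp [Nat.dist]; omega))
  have tt : θP i * θP i₂ = θP i₂ * θP i :=
    pb_mk (PBRel.theta_comm i i₂ (by simp [Nat.dist]; omega))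
  have key : σP i₂ * σP i₁ * θP i * θP i₂ = σP i * σP i₁ * θP i * θP i₂ := by
    calc σP i₂ * σP i₁ * θP i * θP i₂ = σP i₂ * (σP i₁ * θP i) * θP i₂ := by
          simp only [mul_assoc]
      _ = (σP i₂ * σP i) * θP i₁ * (θP i * θP i₂) := by rw [← st1]; simp only [mul_assoc]
      _ = σP i * (σP i₂ * θP i₁ * θP i₂) * θP i := by rw [← ss, tt]; simp only [mul_assoc]
      _ = σP i * σP i₁ * (θP i₂ * θP i) := by rw [st3]; simp only [mul_assoc]
      _ = _ := by rw [← tt]; simp only [mul_assoc]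
  calc σP i₂ * σP i₁ * θP i * ϑP (lo i₂) * ϑP (hi i₂)
      = σP i₂ * σP i₁ * θP i * (ϑP (lo i₂) * ϑP (hi i₂)) := by simp only [mul_assoc]
    _ = σP i₂ * σP i₁ * (θP i * ϑP (lo i₂)) * θP i₂ * ϑP (lo i₂) := by
        rw [← vtv]; simp only [mul_assoc]
    _ = σP i₂ * (σP i₁ * ϑP (lo i₂)) * θP i * θP i₂ * ϑP (lo i₂) := by
        rw [tv]; simp only [mul_assoc]
    _ = (σP i₂ * ϑP (lo i₁)) * σP i₁ * θP i * θP i₂ * ϑP (lo i₂) := by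
        rw [sv2']; simp only [mul_assoc]
    _ = ϑP (lo i₁) * (σP i₂ * σP i₁ * θP i * θP i₂) * ϑP (lo i₂) := by
        rw [sv3]; simp only [mul_assoc]
    _ = (ϑP (lo i₁) * σP i) * σP i₁ * θP i * θP i₂ * ϑP (lo i₂) := by
        rw [key]; simp only [mul_assoc]
    _ = σP i * (ϑP (lo i) * σP i₁) * θP i * θP i₂ * ϑP (lo i₂) := by
        rw [← sv1]; simp only [mul_assoc]
    _ = _ := by rw [← sv21]; simp only [mul_assoc]
end

section
/- The monoid T is finite and its cardinality equals Σ (over all non-negative integers k, m, t with 2k + 2m + t ≤ n) of c(m)·(n!)² / (k!·2^k·(t+2m)!·(k+m)!·2^{k+m}·t!·(n−2k−2m−t)!), where c(m) = 1 if m = 0 and c(m) = 2 if m > 0 (each quotient being an exact natural-number division). (This is the cardinality form of the theorem that T is isomorphic, via σ_i ↦ s_i, θ_i ↦ π_i, ϑ_i ↦ ς_i, to the partial Brauer monoid P𝔅_n.) -/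
section CoxA
open Submonoid
variable {N : Type*} [Monoid N] (g : ℕ → N)

/-- `g (k-1) * ... * g j`. -/
def cxC : ℕ → ℕ → N
  | 0, _ => 1
  | k + 1, j => if j ≤ k then g k * cxC k j else 1

/-- closure of the first `k` generators. -/
def cxG (k : ℕ) : Submonoid N := closure (g '' {i | i < k})

/-- type A Coxeter relations for indices `< m`. -/
structure CxRel (m : ℕ) : Prop where
  sq : ∀ i < m, g i * g i = 1
  comm : ∀ i j, i + 1 < j → j < m → g i * g j = g j * g i
  braid : ∀ i, i + 1 < m → g i * g (i+1) * g i = g (i+1) * g i * g (i+1)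

variable {g} {m : ℕ}

lemma cxC_self (k : ℕ) : cxC g k k = 1 := by
  cases k <;> simp [cxC]

lemma cxC_comm_lo (H : CxRel g m) {i j : ℕ} (hij : i + 1 < j) : ∀ k, k ≤ m →
    cxC g k j * g i = g i * cxC g k j := by
  intro k
  induction k with
  | zero => intro _; simp [cxC]
  | succ k ih =>
    intro hk
    simp only [cxC]
    split_ifs with h
    · rw [mul_assoc, ih (by omega), ← mul_assoc, ← mul_assoc, H.comm i k (by omega) (by omega)]
    · simp

lemma cxC_comm_hi (H : CxRel g m) {i j : ℕ} (him : i < m) : ∀ k, k < i →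
    cxC g k j * g i = g i * cxC g k j := by
  intro k
  induction k with
  | zero => intro _; simp [cxC]
  | succ k ih =>
    intro hk
    simp only [cxC]
    split_ifs with h
    · rw [mul_assoc, ih (by omega), ← mul_assoc, ← mul_assoc, H.comm k i (by omega) (by omega)]
    · simp

lemma cxC_ext {i : ℕ} : ∀ k, i < k → cxC g k (i+1) * g i = cxC g k i := by
  intro k
  induction k with
  | zero => intro h; omega
  | succ k ih =>
    intro hk
    rcases Nat.lt_succ_iff_lt_or_eq.1 hk with h | h
    · simp only [cxC]
      rw [if_pos (by omega), if_pos (by omega), mul_assoc, ih h]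
    · subst h
      simp [cxC, cxC_self]

lemma cxC_shift (H : CxRel g m) {l j : ℕ} (hj : j ≤ l) : ∀ k, k ≤ m → l + 1 < k →
    cxC g k j * g (l+1) = g l * cxC g k j := by
  intro k
  induction k with
  | zero => intro _ h; omega
  | succ k ih =>
    intro hk hl
    rcases Nat.lt_succ_iff_lt_or_eq.1 hl with h | h
    · simp only [cxC]
      rw [if_pos (by omega), mul_assoc, ih (by omega) h, ← mul_assoc, ← mul_assoc,
        H.comm l k (by omega) (by omega)]
    · subst h
      simp only [cxC]
      rw [if_pos (by omega), if_pos hj]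
      have h1 := cxC_comm_hi (g := g) H (i := l+1) (j := j) (by omega) l (by omega)
      have h2 := H.braid l (by omega)
      calc g (l+1) * (g l * cxC g l j) * g (l+1)
          = g (l+1) * g l * (cxC g l j * g (l+1)) := by simp only [mul_assoc]
        _ = (g (l+1) * g l * g (l+1)) * cxC g l j := by rw [h1]; simp only [mul_assoc]
        _ = _ := by rw [← h2]; simp only [mul_assoc]

lemma cxG_mem {i k : ℕ} (h : i < k) : g i ∈ cxG g k := subset_closure ⟨i, h, rfl⟩

lemma cxG_decomp (H : CxRel g m) (k : ℕ) (hk : k + 1 ≤ m) (w : N) (hw : w ∈ cxG g (k+1)) :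
    ∃ u ∈ cxG g k, ∃ j ≤ k + 1, w = u * cxC g (k+1) j := by
  unfold cxG at hw
  induction hw using closure_induction_right with
  | one => exact ⟨1, one_mem _, k+1, le_rfl, by simp [cxC_self]⟩
  | mul_right x y hx hy ih =>
    obtain ⟨u, hu, j, hj, rfl⟩ := ih
    obtain ⟨i, hi, rfl⟩ := hy
    simp only [Set.mem_ofPred_eq] at hi
    by_cases h1 : i + 1 < j
    · refine ⟨u * g i, mul_mem hu (cxG_mem (by omega)), j, hj, ?_⟩
      rw [mul_assoc, cxC_comm_lo H h1 _ hk, mul_assoc]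
    by_cases h2 : i + 1 = j
    · subst h2
      exact ⟨u, hu, i, by omega, by rw [mul_assoc, cxC_ext _ hi]⟩
    by_cases h3 : i = j
    · subst h3
      refine ⟨u, hu, i+1, by omega, ?_⟩
      rw [mul_assoc, ← cxC_ext _ hi, mul_assoc, H.sq i (by omega), mul_one]
    · obtain ⟨l, rfl⟩ : ∃ l, i = l + 1 := ⟨i - 1, by omega⟩
      refine ⟨u * g l, mul_mem hu (cxG_mem (by omega)), j, hj, ?_⟩
      rw [mul_assoc, cxC_shift H (by omega) _ hk hi, mul_assoc]

end CoxA

section SigmaHom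
open Equiv Submonoid

variable {T : Type*} [Monoid T] {n : ℕ}

/-- Pair (adjacent transposition, generator). -/
def gpair (s : Fin (n-1) → T) (i : ℕ) : Perm (Fin n) × T :=
  if h : i < n - 1 then (swap (lo ⟨i, h⟩) (hi ⟨i, h⟩), s ⟨i, h⟩) else 1

lemma swap_braid {α : Type*} [DecidableEq α] {a b c : α} (hab : a ≠ b) (hac : a ≠ c) (hbc : b ≠ c) :
    swap a b * swap b c * swap a b = swap b c * swap a b * swap b c := by
  ext x
  simp only [Perm.mul_apply, swap_apply_def]
  split_ifs <;> simp_all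

lemma swap_disj_comm {α : Type*} [DecidableEq α] {a b c d : α} (hac : a ≠ c) (had : a ≠ d)
    (hbc : b ≠ c) (hbd : b ≠ d) : swap a b * swap c d = swap c d * swap a b := by
  ext x
  simp only [Perm.mul_apply, swap_apply_def]
  split_ifs <;> simp_all

lemma gpair_rel (s : Fin (n-1) → T) (h1 : ∀ i, s i * s i = 1)
    (h2 : ∀ i j : Fin (n-1), 1 < Nat.dist i.1 j.1 → s i * s j = s j * s i)
    (h3 : ∀ i j : Fin (n-1), Nat.dist i.1 j.1 = 1 → s i * s j * s i = s j * s i * s j) :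
    CxRel (gpair s) (n-1) := by
  refine ⟨?_, ?_, ?_⟩
  · intro i hi
    simp only [gpair, hi, dif_pos, Prod.mk_mul_mk, h1, swap_mul_self]; rfl
  · intro i j hij hj
    have hi : i < n - 1 := by omega
    simp only [gpair, hi, hj, dif_pos, Prod.mk_mul_mk]
    rw [h2 _ _ (by simp [Nat.dist]; omega), swap_disj_comm] <;> simp [lo, _root_.hi] <;> omega
  · intro i hj
    have hi : i < n - 1 := by omega
    simp only [gpair, hi, hj, dif_pos, Prod.mk_mul_mk]
    rw [h3 _ _ (by simp [Nat.dist])]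
    have : (lo ⟨i+1, hj⟩ : Fin n) = _root_.hi ⟨i, hi⟩ := rfl
    rw [this, swap_braid] <;> simp [lo, _root_.hi] <;> omega

lemma gpair_fix (s : Fin (n-1) → T) (k : ℕ) (w) (hw : w ∈ cxG (gpair s) k) (x : Fin n)
    (hx : k < x.1) : w.1 x = x := by
  unfold cxG at hw
  induction hw using closure_induction with
  | one => rfl
  | mul a b _ _ ha hb => simp [ha, hb]
  | mem a ha =>
    obtain ⟨i, hi, rfl⟩ := ha
    simp only [Set.mem_ofPred_eq] at hi
    unfold gpair
    split_ifs with h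
    · apply swap_apply_of_ne_of_ne <;> simp [Fin.ext_iff, lo, _root_.hi] <;> omega
    · rfl

lemma gpair_C (s : Fin (n-1) → T) (j : ℕ) (hj : j < n) : ∀ k (hk : k < n), j ≤ k →
    (cxC (gpair s) k j).1 ⟨j, hj⟩ = ⟨k, hk⟩ := by
  intro k
  induction k with
  | zero => intro hk h; simp [cxC]; omega
  | succ k ih =>
    intro hk h
    simp only [cxC]
    split_ifs with hjk
    · have hk' : k < n - 1 := by omega
      rw [Prod.fst_mul, Perm.mul_apply, ih (by omega) hjk]
      simp only [gpair, hk', dif_pos]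
      exact swap_apply_left (lo ⟨k, hk'⟩) _
    · have : j = k + 1 := by omega
      subst this; rfl

lemma gpair_triv (s : Fin (n-1) → T) (H : CxRel (gpair s) (n-1)) : ∀ k ≤ n - 1, ∀ w ∈ cxG (gpair s) k,
    w.1 = 1 → w = 1 := by
  intro k
  induction k with
  | zero =>
    intro _ w hw _
    simpa [cxG] using hw
  | succ k ih =>
    intro hk w hw h1
    obtain ⟨u, hu, j, hj, rfl⟩ := cxG_decomp H k hk w hw
    have e1 := gpair_C s j (by omega) (k+1) (by omega) hj
    have e2 := gpair_fix s k u hu ⟨k+1, by omega⟩ (by simp)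
    have e3 : (u * cxC (gpair s) (k+1) j).1 ⟨j, by omega⟩ = ⟨k+1, by omega⟩ := by
      rw [Prod.fst_mul, Perm.mul_apply, e1, e2]
    rw [h1] at e3
    have : j = k + 1 := by simpa using e3
    subst this
    rw [cxC_self, mul_one] at h1 ⊢
    exact ih (by omega) u hu h1

theorem exists_sigmaHom (s : Fin (n-1) → T) (h1 : ∀ i, s i * s i = 1)
    (h2 : ∀ i j : Fin (n-1), 1 < Nat.dist i.1 j.1 → s i * s j = s j * s i)
    (h3 : ∀ i j : Fin (n-1), Nat.dist i.1 j.1 = 1 → s i * s j * s i = s j * s i * s j) :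
    ∃ f : Perm (Fin n) →* T, ∀ i, f (swap (lo i) (hi i)) = s i := by
  have H := gpair_rel s h1 h2 h3
  set Γ := cxG (gpair s) (n-1) with hΓ
  have htot : ∀ p : Perm (Fin n), ∃ w, (p, w) ∈ Γ := by
    intro p
    rcases n with _ | n
    · exact ⟨1, by rw [Subsingleton.elim p 1]; exact one_mem Γ⟩
    have hp : p ∈ closure (Set.range fun i : Fin n ↦ swap i.castSucc i.succ) := by
      rw [Perm.mclosure_swap_castSucc_succ]; trivial
    induction hp using closure_induction with
    | one => exact ⟨1, one_mem _⟩
    | mul a b _ _ ha hb =>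
      obtain ⟨w, hw⟩ := ha
      obtain ⟨v, hv⟩ := hb
      exact ⟨w * v, mul_mem hw hv⟩
    | mem a ha =>
      obtain ⟨i, rfl⟩ := ha
      refine ⟨s i, ?_⟩
      have := cxG_mem (g := gpair s) (i := i.1) (k := n + 1 - 1) (by simp)
      have e : gpair s i.1 = (swap i.castSucc i.succ, s i) := by
        unfold gpair
        rw [dif_pos (by simp)]
        rfl
      rwa [e] at this
  have hinv : ∀ w ∈ Γ, ∃ v ∈ Γ, w * v = 1 ∧ v * w = 1 := by
    intro w hw
    rw [hΓ] at hw
    unfold cxG at hw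
    induction hw using closure_induction with
    | one => exact ⟨1, one_mem _, by simp, by simp⟩
    | mul a b _ _ ha hb =>
      obtain ⟨a', ha', h1, h2⟩ := ha
      obtain ⟨b', hb', h3, h4⟩ := hb
      refine ⟨b' * a', mul_mem hb' ha', ?_, ?_⟩
      · rw [mul_assoc, ← mul_assoc b, h3, one_mul, h1]
      · rw [mul_assoc, ← mul_assoc a', h2, one_mul, h4]
    | mem a ha =>
      obtain ⟨i, hi, rfl⟩ := ha
      exact ⟨_, cxG_mem hi, H.sq i hi, H.sq i hi⟩
  have huniq : ∀ p w v, (p, w) ∈ Γ → (p, v) ∈ Γ → w = v := by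
    intro p w v hw hv
    obtain ⟨⟨q, u⟩, hu, e1, e2⟩ := hinv _ hw
    simp only [Prod.mk_mul_mk, Prod.mk_eq_one] at e1 e2
    have := gpair_triv s H _ le_rfl _ (mul_mem hu hv) (by simp [e2.1])
    simp only [Prod.mk_mul_mk, Prod.mk_eq_one] at this
    calc w = w * (u * v) := by rw [this.2, mul_one]
      _ = v := by rw [← mul_assoc, e1.2, one_mul]
  choose f hf using htot
  refine ⟨⟨⟨f, huniq _ _ _ (hf 1) (one_mem _)⟩, fun p q => huniq _ _ _ (hf _) (mul_mem (hf p) (hf q))⟩, ?_⟩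
  intro i
  refine huniq _ _ _ (hf _) ?_
  have := cxG_mem (g := gpair s) (i := i.1) (k := n - 1) i.2
  unfold gpair at this
  rwa [dif_pos i.2] at this

end SigmaHom

section TStruct
open Equiv Submonoid
variable {n : ℕ}

lemma pbrel {a b : FreeMonoid (PBGen n)} (h : PBRel n a b) :
    PresentedMonoid.mk (PBRel n) a = PresentedMonoid.mk (PBRel n) b :=
  PresentedMonoid.mk_eq_mk_of_rel h

lemma sgHom_exists (n : ℕ) : ∃ f : Perm (Fin n) →* PBMonoid n, ∀ i, f (swap (lo i) (hi i)) = σP i :=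
  exists_sigmaHom (T := PBMonoid n) σP (fun i => pbrel (.sigma_sq i))
    (fun i j h => pbrel (.sigma_comm i j h)) (fun i j h => pbrel (.braid i j h))

/-- The homomorphism `S_n → T`. -/
noncomputable def sg {n : ℕ} : Perm (Fin n) →* PBMonoid n := (sgHom_exists n).choose

lemma sg_adj (i : Fin (n-1)) : sg (swap (lo i) (hi i)) = σP i := (sgHom_exists n).choose_spec i

lemma lo_ne_hi (i : Fin (n-1)) : lo i ≠ hi i := by simp [lo, hi]

lemma adj_induction {P : Perm (Fin n) → Prop} (h1 : P 1) (hm : ∀ p q, P p → P q → P (p * q))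
    (hs : ∀ i, P (swap (lo i) (hi i))) (p : Perm (Fin n)) : P p := by
  rcases n with _ | n
  · rw [Subsingleton.elim p 1]; exact h1
  have hp : p ∈ closure (Set.range fun i : Fin n ↦ swap i.castSucc i.succ) := by
    rw [Perm.mclosure_swap_castSucc_succ]; trivial
  induction hp using closure_induction with
  | one => exact h1
  | mul a b _ _ ha hb => exact hm _ _ ha hb
  | mem a ha =>
    obtain ⟨i, rfl⟩ := ha
    exact hs i

lemma σP_sq (i : Fin (n-1)) : (σP i : PBMonoid n) * σP i = 1 := pbrel (.sigma_sq i)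

lemma sg_ϑ (p : Perm (Fin n)) : ∀ a, sg p * ϑP a = ϑP (p a) * sg p := by
  induction p using adj_induction with
  | h1 => intro a; simp
  | hm p q hp hq =>
    intro a
    rw [map_mul, mul_assoc, hq, ← mul_assoc, hp, mul_assoc]; rfl
  | hs i =>
    intro a
    rw [sg_adj]
    have e : (σP i : PBMonoid n) * ϑP (lo i) = ϑP (hi i) * σP i := pbrel (.sigma_v i)
    by_cases h1 : a = lo i
    · rw [h1, swap_apply_left, e]
    by_cases h2 : a = hi i
    · rw [h2, swap_apply_right]
      calc (σP i : PBMonoid n) * ϑP (hi i) = σP i * (ϑP (hi i) * σP i) * σP i := by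
            rw [mul_assoc, mul_assoc, σP_sq, mul_one]
        _ = _ := by rw [← e, ← mul_assoc, σP_sq, one_mul]
    · rw [swap_apply_of_ne_of_ne h1 h2]
      exact pbrel (.sigma_v_comm i a h1 h2)

lemma swap_subtype_induction {P : Perm (Fin n) → Prop} (A : Finset (Fin n))
    (h1 : P 1) (hm : ∀ p q, P p → P q → P (p * q))
    (hs : ∀ x ∈ A, ∀ y ∈ A, x ≠ y → P (swap x y)) (p : Perm (Fin n)) (hp : ∀ x ∉ A, p x = x) : P p := by
  have hpA : ∀ x, x ∈ A ↔ p x ∈ A := by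
    intro x
    constructor
    · intro hx
      by_contra h
      have := hp _ h
      have := p.injective this
      rw [this] at h; exact h hx
    · intro hx
      by_contra h
      rw [hp x h] at hx; exact h hx
  have e : p = Perm.ofSubtype (p.subtypePerm (fun x => (hpA x).symm)) := by
    rw [Perm.ofSubtype_subtypePerm]
    intro x hx
    by_contra h; exact hx (hp x h)
  rw [e]
  generalize p.subtypePerm (fun x => (hpA x).symm) = q
  induction q using Perm.swap_induction_on with
  | one => rw [map_one]; exact h1
  | swap_mul f x y hxy ih =>
    rw [map_mul, Perm.ofSubtype_swap_eq]
    exact hm _ _ (hs _ x.2 _ y.2 (fun h => hxy (Subtype.ext h))) ih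

lemma swap_commute_θ0 (h : 0 < n - 1) (x : ℕ) (hx : 2 ≤ x) (d : ℕ) : ∀ (hy : x + d + 1 < n),
    Commute (sg (swap (⟨x, by omega⟩ : Fin n) ⟨x + d + 1, hy⟩)) (θP ⟨0, h⟩) := by
  have hadj : ∀ z (hz : z < n - 1), 2 ≤ z →
     Commute (sg (swap (lo ⟨z, hz⟩) (hi ⟨z, hz⟩))) (θP ⟨0, h⟩ : PBMonoid n) := by
    intro z hz h2
    rw [sg_adj]
    exact (pbrel (.theta_sigma_comm ⟨0, h⟩ ⟨z, hz⟩ (by simp [Nat.dist]; omega))).symm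
  induction d with
  | zero => intro hy; exact hadj x (by omega) hx
  | succ d ih =>
    intro hy
    have h1 := ih (by omega)
    have h2 := hadj (x + d + 1) (by omega) (by omega)
    have e : swap (⟨x, by omega⟩ : Fin n) ⟨x + (d+1) + 1, hy⟩ =
      swap (lo ⟨x+d+1, by omega⟩) (hi ⟨x+d+1, by omega⟩) * swap (⟨x, by omega⟩ : Fin n) ⟨x + d + 1, by omega⟩ *
        swap (lo ⟨x+d+1, by omega⟩) (hi ⟨x+d+1, by omega⟩) := by
      have a1 : (⟨x, by omega⟩ : Fin n) ≠ ⟨x + d + 1, by omega⟩ := by simp; omega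
      have a2 : (⟨x, by omega⟩ : Fin n) ≠ ⟨x + d + 1 + 1, by omega⟩ := by simp; omega
      have a3 : (⟨x + d + 1, by omega⟩ : Fin n) ≠ ⟨x + d + 1 + 1, by omega⟩ := by simp
      change swap (⟨x, by omega⟩ : Fin n) ⟨x + d + 1 + 1, by omega⟩ =
        swap (⟨x + d + 1, by omega⟩ : Fin n) ⟨x + d + 1 + 1, by omega⟩ * swap (⟨x, by omega⟩ : Fin n) ⟨x + d + 1, by omega⟩ *
        swap (⟨x + d + 1, by omega⟩ : Fin n) ⟨x + d + 1 + 1, by omega⟩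
      generalize (⟨x, by omega⟩ : Fin n) = a at *
      generalize (⟨x + d + 1, by omega⟩ : Fin n) = b at *
      generalize (⟨x + d + 1 + 1, by omega⟩ : Fin n) = c at *
      ext z
      simp only [Perm.mul_apply, swap_apply_def]
      split_ifs <;> simp_all
    rw [e, map_mul, map_mul]
    exact (h2.mul_left h1).mul_left h2

lemma stab_θ0 (h : 0 < n - 1) (p : Perm (Fin n)) (h0 : p (lo ⟨0, h⟩) = lo ⟨0, h⟩)
    (h1 : p (hi ⟨0, h⟩) = hi ⟨0, h⟩) : Commute (sg p) (θP ⟨0, h⟩) := by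
  refine swap_subtype_induction (P := fun p => Commute (sg p) (θP ⟨0, h⟩))
    (Finset.univ.filter (fun x : Fin n => 2 ≤ x.1)) ?_ ?_ ?_ p ?_
  · simp
  · intro p q hp hq; rw [map_mul]; exact hp.mul_left hq
  · intro x hx y hy hxy
    wlog hlt : x < y generalizing x y
    · rw [swap_comm]; exact this y hy x hx hxy.symm (lt_of_le_of_ne (not_lt.1 hlt) hxy.symm)
    simp only [Finset.mem_filter, Finset.mem_univ, true_and] at hx hy
    have hlt' : x.1 < y.1 := hlt
    obtain ⟨d, hd⟩ : ∃ d, y.1 = x.1 + d + 1 := ⟨y.1 - x.1 - 1, by omega⟩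
    have := swap_commute_θ0 h x.1 hx d (by omega)
    convert this
  · intro x hx
    simp only [Finset.mem_filter, Finset.mem_univ, true_and, not_le] at hx
    have : x = lo ⟨0, h⟩ ∨ x = hi ⟨0, h⟩ := by
      simp only [lo, hi, Fin.ext_iff]; omega
    rcases this with rfl | rfl <;> assumption

lemma θ_shift (i j : Fin (n-1)) (h : Nat.dist i.1 j.1 = 1) :
    (σP i : PBMonoid n) * σP j * θP i = θP j * σP i * σP j := by
  have h' : Nat.dist j.1 i.1 = 1 := by rw [Nat.dist_comm]; exact h
  have a : (σP i : PBMonoid n) * θP j * θP i = σP j * θP i := pbrel (.sigma_theta_theta i j h)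
  have b : (θP j : PBMonoid n) * θP i * σP j = θP j * σP i := pbrel (.theta_theta_sigma j i h')
  have a' : (θP j : PBMonoid n) * θP i = σP i * σP j * θP i := by
    rw [mul_assoc, ← a, ← mul_assoc, ← mul_assoc, σP_sq, one_mul]
  rw [← a', ← b, mul_assoc, σP_sq, mul_one]

lemma θ_base (h : 0 < n - 1) (k : ℕ) : ∀ (hk : k < n - 1) (p : Perm (Fin n)),
    p (lo ⟨0, h⟩) = lo ⟨k, hk⟩ → p (hi ⟨0, h⟩) = hi ⟨k, hk⟩ →
    sg p * θP ⟨0, h⟩ = θP ⟨k, hk⟩ * sg p := by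
  induction k with
  | zero => intro hk p h0 h1; exact stab_θ0 h p h0 h1
  | succ k ih =>
    intro hk p h0 h1
    have hk' : k < n - 1 := by omega
    set i : Fin (n-1) := ⟨k, hk'⟩ with hi'
    set j : Fin (n-1) := ⟨k+1, hk⟩ with hj
    have e := ih hk' (swap (lo j) (hi j) * swap (lo i) (hi i) * p)
      (by
        rw [Perm.mul_apply, Perm.mul_apply, h0, show lo j = hi i from rfl, swap_apply_right]
        rw [swap_apply_of_ne_of_ne] <;> simp [lo, hi, i, j] <;> omega)
      (by
        rw [Perm.mul_apply, Perm.mul_apply, h1]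
        rw [swap_apply_of_ne_of_ne (a := lo i), swap_apply_right]
        · rfl
        all_goals simp [lo, hi, i, j]
        all_goals omega)
    rw [map_mul, map_mul, sg_adj, sg_adj] at e
    have sh := θ_shift i j (by simp [i, j, Nat.dist])
    have : sg p = σP i * σP j * (σP j * σP i * sg p) := by
      rw [mul_assoc (σP i), ← mul_assoc (σP j), ← mul_assoc (σP j), σP_sq, one_mul, ← mul_assoc, σP_sq, one_mul]
    rw [this, mul_assoc, e, ← mul_assoc, sh]
    simp only [mul_assoc]

/-- `θ_{ab}` for arbitrary points; `1` when `a = b`. -/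
noncomputable def tht (a b : Fin n) : PBMonoid n :=
  open Classical in
  if h : ∃ (p : Perm (Fin n)) (i : Fin (n-1)), p (lo i) = a ∧ p (hi i) = b then
    sg h.choose * θP h.choose_spec.choose * sg h.choose⁻¹ else 1

lemma sg_inv_mul (p : Perm (Fin n)) : (sg p⁻¹ : PBMonoid n) * sg p = 1 := by
  rw [← map_mul]; simp
lemma sg_mul_inv (p : Perm (Fin n)) : (sg p : PBMonoid n) * sg p⁻¹ = 1 := by
  rw [← map_mul]; simp

lemma exists_perm2 {α : Type*} [DecidableEq α] {a b c d : α} (h : a ≠ b) (h' : c ≠ d) :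
    ∃ p : Perm α, p a = c ∧ p b = d := by
  refine ⟨swap (swap a c b) d * swap a c, ?_, ?_⟩
  · rw [Perm.mul_apply, swap_apply_left, swap_apply_of_ne_of_ne _ h']
    intro e
    have := congrArg (swap a c) e
    rw [swap_apply_self, swap_apply_right] at this
    exact h this
  · rw [Perm.mul_apply, swap_apply_left]

lemma conj_θ (i j : Fin (n-1)) (p : Perm (Fin n)) (h0 : p (lo i) = lo j) (h1 : p (hi i) = hi j) :
    sg p * θP i = θP j * sg p := by
  have h : 0 < n - 1 := by have := i.2; omega
  obtain ⟨q, q0, q1⟩ := exists_perm2 (lo_ne_hi ⟨0, h⟩) (lo_ne_hi i)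
  have e1 := θ_base h i.1 i.2 q q0 q1
  have e2 := θ_base h j.1 j.2 (p * q) (by rw [Perm.mul_apply, q0, h0]) (by rw [Perm.mul_apply, q1, h1])
  rw [map_mul, mul_assoc, e1] at e2
  have := congrArg (· * sg q⁻¹) e2
  simp only [mul_assoc, sg_mul_inv, mul_one] at this
  exact this

lemma tht_eq (p : Perm (Fin n)) (i : Fin (n-1)) : tht (p (lo i)) (p (hi i)) = sg p * θP i * sg p⁻¹ := by
  have h : ∃ (q : Perm (Fin n)) (j : Fin (n-1)), q (lo j) = p (lo i) ∧ q (hi j) = p (hi i) := ⟨p, i, rfl, rfl⟩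
  unfold tht
  rw [dif_pos h]
  have := h.choose_spec.choose_spec
  generalize h.choose_spec.choose = j at *
  generalize h.choose = q at *
  have e := conj_θ i j (q⁻¹ * p) (by rw [Perm.mul_apply, ← this.1]; simp) (by rw [Perm.mul_apply, ← this.2]; simp)
  have : sg p = sg q * sg (q⁻¹ * p) := by rw [← map_mul]; simp
  rw [this, mul_assoc (sg q) _ (θP i), e]
  simp only [mul_assoc]
  congr 2
  rw [← map_mul]; simp

lemma tht_adj (i : Fin (n-1)) : tht (lo i) (hi i) = θP i := by
  simpa using tht_eq 1 i

lemma tht_self (a : Fin n) : tht a a = 1 := by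
  unfold tht
  rw [dif_neg]
  rintro ⟨p, i, h1, h2⟩
  exact lo_ne_hi i (p.injective (h1.trans h2.symm))

/-- conjugation. -/
noncomputable def cj (p : Perm (Fin n)) : PBMonoid n →* PBMonoid n where
  toFun x := sg p * x * sg p⁻¹
  map_one' := by rw [mul_one, sg_mul_inv]
  map_mul' x y := by
    calc sg p * (x * y) * sg p⁻¹ = sg p * x * 1 * y * sg p⁻¹ := by simp only [mul_assoc, one_mul]
      _ = _ := by rw [← sg_inv_mul p]; simp only [mul_assoc]

lemma cj_mul (p q : Perm (Fin n)) (x) : cj p (cj q x) = cj (p * q) x := by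
  change sg p * (sg q * x * sg q⁻¹) * sg p⁻¹ = sg (p * q) * x * sg (p * q)⁻¹
  rw [mul_inv_rev, map_mul, map_mul]
  simp only [mul_assoc]

lemma exists_of_ne {a b : Fin n} (h : a ≠ b) :
    ∃ (p : Perm (Fin n)) (i : Fin (n-1)), p (lo i) = a ∧ p (hi i) = b := by
  have hn : 0 < n - 1 := by
    have := a.2; have := b.2
    have : a.1 ≠ b.1 := fun e => h (Fin.ext e)
    omega
  obtain ⟨p, h0, h1⟩ := exists_perm2 (lo_ne_hi ⟨0, hn⟩) h
  exact ⟨p, _, h0, h1⟩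

lemma cj_tht (p : Perm (Fin n)) (a b : Fin n) : cj p (tht a b) = tht (p a) (p b) := by
  by_cases h : a = b
  · subst h; rw [tht_self, tht_self, map_one]
  obtain ⟨q, i, rfl, rfl⟩ := exists_of_ne h
  have h1 := tht_eq q i
  have h2 := tht_eq (p * q) i
  rw [h1]
  exact ((cj_mul p q (θP i)).trans h2.symm)

lemma cj_ϑ (p : Perm (Fin n)) (a : Fin n) : cj p (ϑP a) = ϑP (p a) := by
  change sg p * ϑP a * sg p⁻¹ = _
  rw [sg_ϑ, mul_assoc, sg_mul_inv, mul_one]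

lemma cj_sw (p : Perm (Fin n)) (a b : Fin n) : cj p (sg (swap a b)) = sg (swap (p a) (p b)) := by
  change sg p * sg (swap a b) * sg p⁻¹ = _
  rw [← map_mul, ← map_mul]
  congr 1
  rw [mul_swap_eq_swap_mul]
  simp

lemma sg_mul_eq_cj (p : Perm (Fin n)) (x : PBMonoid n) : sg p * x = cj p x * sg p := by
  change _ = sg p * x * sg p⁻¹ * sg p
  rw [mul_assoc _ _ (sg p), sg_inv_mul, mul_one]

end TStruct

section Ident
open Equiv
variable {n : ℕ}

lemma exists_perm_fun {k : ℕ} {α : Type*} [DecidableEq α] [Fintype α] {x y : Fin k → α}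
    (hx : Function.Injective x) (hy : Function.Injective y) : ∃ p : Perm α, ∀ i, p (x i) = y i := by
  classical
  let e : {a // a ∈ Set.range x} ≃ {a // a ∈ Set.range y} :=
    (Equiv.ofInjective x hx).symm.trans (Equiv.ofInjective y hy)
  refine ⟨e.extendSubtype, fun i => ?_⟩
  rw [e.extendSubtype_apply_of_mem (x i) ⟨i, rfl⟩]
  have : (⟨x i, ⟨i, rfl⟩⟩ : {a // a ∈ Set.range x}) = Equiv.ofInjective x hx i := rfl
  rw [this]
  simp [e]

lemma tht_idem (a b : Fin n) : tht a b * tht a b = tht a b := by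
  by_cases h : a = b
  · subst h; simp [tht_self]
  obtain ⟨p, i, rfl, rfl⟩ := exists_of_ne h
  rw [← cj_tht, ← map_mul, tht_adj]
  exact congrArg (cj p) (pbrel (.theta_idem i))

lemma sw_tht (a b : Fin n) : sg (swap a b) * tht a b = tht a b := by
  by_cases h : a = b
  · subst h; rw [swap_self, tht_self, mul_one]; exact map_one sg
  obtain ⟨p, i, rfl, rfl⟩ := exists_of_ne h
  rw [← cj_tht, ← cj_sw, ← map_mul, tht_adj, sg_adj]
  exact congrArg (cj p) (pbrel (.sigma_theta i))

lemma tht_sw (a b : Fin n) : tht a b * sg (swap a b) = tht a b := by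
  by_cases h : a = b
  · subst h; rw [swap_self, tht_self, one_mul]; exact map_one sg
  obtain ⟨p, i, rfl, rfl⟩ := exists_of_ne h
  rw [← cj_tht, ← cj_sw, ← map_mul, tht_adj, sg_adj]
  exact congrArg (cj p) (pbrel (.theta_sigma i))

lemma tht_symm (a b : Fin n) : tht a b = tht b a := by
  have := sg_mul_eq_cj (swap a b) (tht a b)
  rw [cj_tht, swap_apply_left, swap_apply_right, sw_tht, swap_comm, tht_sw] at this
  exact this

lemma ϑ_idem (a : Fin n) : (ϑP a : PBMonoid n) * ϑP a = ϑP a := pbrel (.v_idem a)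

lemma ϑ_comm (a b : Fin n) : Commute (ϑP a : PBMonoid n) (ϑP b) := by
  by_cases h : a = b
  · rw [h]
  · exact pbrel (.v_comm a b h)

lemma ϑ_tht_comm (a b c : Fin n) (ha : c ≠ a) (hb : c ≠ b) : Commute (ϑP c) (tht a b) := by
  by_cases h : a = b
  · subst h; rw [tht_self]; exact Commute.one_right _
  obtain ⟨p, i, rfl, rfl⟩ := exists_of_ne h
  obtain ⟨c, rfl⟩ := p.surjective c
  rw [← cj_tht, ← cj_ϑ, tht_adj]
  have : Commute (ϑP c) (θP i) :=
    (pbrel (.theta_v_comm i c (fun e => ha (by rw [e])) (fun e => hb (by rw [e])))).symm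
  exact this.map (cj p)

lemma tht_ϑϑ_tht (a b : Fin n) (h : a ≠ b) : tht a b * ϑP a * ϑP b * tht a b = tht a b := by
  obtain ⟨p, i, rfl, rfl⟩ := exists_of_ne h
  rw [← cj_tht, ← cj_ϑ, ← cj_ϑ, ← map_mul, ← map_mul, ← map_mul, tht_adj]
  congr 1
  have e1 : (θP i : PBMonoid n) * ϑP (lo i) = θP i * ϑP (lo i) * ϑP (hi i) := pbrel (.theta_vv i)
  rw [← e1]
  exact pbrel (.theta_v_theta i)

lemma ϑϑ_tht (a b : Fin n) (h : a ≠ b) : ϑP a * ϑP b * tht a b = ϑP b * tht a b := by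
  obtain ⟨p, i, rfl, rfl⟩ := exists_of_ne h
  rw [← cj_tht, ← cj_ϑ, ← cj_ϑ, ← map_mul, ← map_mul, ← map_mul, tht_adj]
  congr 1
  have e1 : (ϑP (lo i) : PBMonoid n) * θP i = ϑP (lo i) * ϑP (hi i) * θP i := pbrel (.vv_theta i)
  have e2 : (ϑP (lo i) : PBMonoid n) * θP i = ϑP (hi i) * θP i := pbrel (.v_theta i)
  rw [← e1, e2]

lemma ϑ_tht_ϑ (a b : Fin n) (h : a ≠ b) : ϑP a * tht a b * ϑP a = ϑP a * ϑP b := by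
  obtain ⟨p, i, rfl, rfl⟩ := exists_of_ne h
  rw [← cj_tht, ← cj_ϑ, ← cj_ϑ, ← map_mul, ← map_mul, ← map_mul, tht_adj]
  congr 1
  exact pbrel (.v_theta_v i)

lemma sw_ϑϑ (a b : Fin n) (h : a ≠ b) : sg (swap a b) * (ϑP a * ϑP b) = ϑP a * ϑP b := by
  obtain ⟨p, i, rfl, rfl⟩ := exists_of_ne h
  rw [← cj_sw, ← cj_ϑ, ← cj_ϑ, ← map_mul, ← map_mul, sg_adj]
  congr 1
  have e1 : (ϑP (lo i) : PBMonoid n) * σP i * ϑP (lo i) = ϑP (lo i) * ϑP (hi i) := pbrel (.v_sigma_v i)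
  have e2 : (σP i : PBMonoid n) * ϑP (lo i) = ϑP (hi i) * σP i := pbrel (.sigma_v i)
  have e3 : (σP i : PBMonoid n) * ϑP (hi i) = ϑP (lo i) * σP i := by
    have := sg_ϑ (swap (lo i) (hi i)) (hi i)
    rwa [swap_apply_right, sg_adj] at this
  rw [ϑ_comm (lo i) (hi i), ← mul_assoc, e3, e1, ϑ_comm (lo i) (hi i)]

lemma tht_tht (a b c : Fin n) (hab : a ≠ b) (hac : a ≠ c) (hbc : b ≠ c) :
    tht c b * tht a b = sg (swap a c) * tht a b := by
  have hn : 3 ≤ n := by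
    have h1 : a.1 ≠ b.1 := fun e => hab (Fin.ext e)
    have h2 : a.1 ≠ c.1 := fun e => hac (Fin.ext e)
    have h3 : b.1 ≠ c.1 := fun e => hbc (Fin.ext e)
    omega
  set i : Fin (n-1) := ⟨0, by omega⟩ with hi'
  set j : Fin (n-1) := ⟨1, by omega⟩ with hj'
  obtain ⟨p, hp⟩ := exists_perm_fun (x := ![lo i, hi i, hi j]) (y := ![a, b, c])
    (by intro x y; fin_cases x <;> fin_cases y <;> simp [lo, hi, i, j])
    (by intro x y; fin_cases x <;> fin_cases y <;> simp [hab, hac, hbc, hab.symm, hac.symm, hbc.symm])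
  have p0 : p (lo i) = a := hp 0
  have p1 : p (hi i) = b := hp 1
  have p2 : p (hi j) = c := hp 2
  subst p0 p1 p2
  rw [tht_symm (p (hi j)), ← cj_tht, ← cj_tht, ← cj_sw, ← map_mul, ← map_mul, tht_adj]
  congr 1
  have hl : hi i = lo j := rfl
  have e0 : swap (lo i) (hi j) = swap (lo i) (hi i) * swap (lo j) (hi j) * swap (lo i) (hi i) := by
    have a1 : lo i ≠ hi i := lo_ne_hi i
    have a2 : lo i ≠ hi j := fun e => hac (by rw [e])
    have a3 : hi i ≠ hi j := fun e => hbc (by rw [e])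
    rw [← hl]
    generalize lo i = a at *
    generalize hi i = b at *
    generalize hi j = c at *
    ext z
    simp only [Perm.mul_apply, swap_apply_def]
    split_ifs <;> simp_all
  have e1 : (σP i : PBMonoid n) * θP i = θP i := pbrel (.sigma_theta i)
  have e2 : (σP i : PBMonoid n) * θP j * θP i = σP j * θP i :=
    pbrel (.sigma_theta_theta i j (by simp [i, j, Nat.dist]))
  rw [e0, map_mul, map_mul, sg_adj, sg_adj, mul_assoc, e1, mul_assoc, ← e2, hl, tht_adj]
  rw [← mul_assoc, ← mul_assoc, σP_sq, one_mul]

lemma tht_comm (a b c d : Fin n) (hac : a ≠ c) (had : a ≠ d) (hbc : b ≠ c) (hbd : b ≠ d) :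
    Commute (tht a b) (tht c d) := by
  by_cases hab : a = b
  · subst hab; rw [tht_self]; exact Commute.one_left _
  by_cases hcd : c = d
  · subst hcd; rw [tht_self]; exact Commute.one_right _
  have hn : 4 ≤ n := by
    have := Finset.card_le_univ ({a, b, c, d} : Finset (Fin n))
    rw [Finset.card_eq_of_equiv_fin (n := 4), Fintype.card_fin] at this
    · exact this
    apply Finset.equivFinOfCardEq
    rw [Finset.card_insert_of_notMem, Finset.card_insert_of_notMem, Finset.card_insert_of_notMem,
      Finset.card_singleton] <;> simp [*]
  set i : Fin (n-1) := ⟨0, by omega⟩ with hi'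
  set j : Fin (n-1) := ⟨2, by omega⟩ with hj'
  obtain ⟨p, hp⟩ := exists_perm_fun (x := ![lo i, hi i, lo j, hi j]) (y := ![a, b, c, d])
    (by intro x y; fin_cases x <;> fin_cases y <;> simp [lo, hi, i, j])
    (by
      have := Ne.symm hac; have := Ne.symm had; have := Ne.symm hbc; have := Ne.symm hbd
      have := Ne.symm hab; have := Ne.symm hcd
      intro x y; fin_cases x <;> fin_cases y <;> simp [*])
  have p0 : p (lo i) = a := hp 0
  have p1 : p (hi i) = b := hp 1
  have p2 : p (lo j) = c := hp 2
  have p3 : p (hi j) = d := hp 3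
  subst p0 p1 p2 p3
  rw [← cj_tht, ← cj_tht, tht_adj, tht_adj]
  have : Commute (θP i : PBMonoid n) (θP j) := pbrel (.theta_comm i j (by simp [i, j, Nat.dist]))
  exact this.map (cj p)

end Ident

section NF
open Equiv
variable {n : ℕ}

/-- product of `ϑ_a` over `a ∈ A`. -/
noncomputable def EE (A : Finset (Fin n)) : PBMonoid n :=
  A.noncommProd ϑP (fun a _ b _ _ => ϑ_comm a b)

lemma EE_empty : EE (∅ : Finset (Fin n)) = 1 := Finset.noncommProd_empty _ _

lemma EE_commute (A : Finset (Fin n)) (x : PBMonoid n) (h : ∀ a ∈ A, Commute x (ϑP a)) :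
    Commute x (EE A) := Finset.noncommProd_commute _ _ _ _ h

lemma EE_ϑ (A : Finset (Fin n)) (a : Fin n) : Commute (ϑP a) (EE A) :=
  EE_commute A _ (fun b _ => ϑ_comm a b)

lemma EE_insert' (A : Finset (Fin n)) (a : Fin n) (h : a ∉ A) : EE (insert a A) = ϑP a * EE A :=
  Finset.noncommProd_insert_of_notMem _ _ _ _ h

lemma EE_mem (A : Finset (Fin n)) (a : Fin n) (h : a ∈ A) : ϑP a * EE A = EE A := by
  rw [← Finset.insert_erase h, EE_insert' _ _ (Finset.notMem_erase _ _), ← mul_assoc, ϑ_idem]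

lemma EE_mem' (A : Finset (Fin n)) (a : Fin n) (h : a ∈ A) : EE A * ϑP a = EE A := by
  rw [← (EE_ϑ A a).eq, EE_mem A a h]

lemma EE_insert (A : Finset (Fin n)) (a : Fin n) : EE (insert a A) = EE A * ϑP a := by
  by_cases h : a ∈ A
  · rw [Finset.insert_eq_of_mem h, EE_mem' A a h]
  · rw [EE_insert' A a h, (EE_ϑ A a).eq]

lemma sg_EE (p : Perm (Fin n)) (A : Finset (Fin n)) :
    sg p * EE A = EE (A.map p.toEmbedding) * sg p := by
  induction A using Finset.induction_on with
  | empty => simp [EE_empty]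
  | insert a A _ ih =>
    rw [Finset.map_insert, EE_insert, EE_insert, ← mul_assoc, ih, mul_assoc, sg_ϑ, mul_assoc]
    rfl

lemma sg_EE_absorb (A : Finset (Fin n)) (p : Perm (Fin n)) (hp : ∀ x ∉ A, p x = x) :
    sg p * EE A = EE A := by
  refine swap_subtype_induction (P := fun p => sg p * EE A = EE A) A ?_ ?_ ?_ p hp
  · simp
  · intro p q h1 h2; rw [map_mul, mul_assoc, h2, h1]
  · intro x hx y hy hxy
    have e : EE A = ϑP x * ϑP y * EE A := by rw [mul_assoc, EE_mem A y hy, EE_mem A x hx]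
    rw [e, ← mul_assoc, sw_ϑϑ x y hxy]

/-- product of the `θ_{a,τ a}`. -/
noncomputable def Th (τ : Perm (Fin n)) : PBMonoid n :=
  ((List.finRange n).map (fun a => tht a (τ a))).prod

lemma Th_one : Th (1 : Perm (Fin n)) = 1 := by
  unfold Th
  apply List.prod_eq_one
  intro x hx
  obtain ⟨a, _, rfl⟩ := List.mem_map.1 hx
  exact tht_self a

lemma Th_commute (τ : Perm (Fin n)) (x : PBMonoid n) (h : ∀ a, Commute x (tht a (τ a))) :
    Commute x (Th τ) := by
  apply Commute.list_prod_right
  intro y hy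
  obtain ⟨a, _, rfl⟩ := List.mem_map.1 hy
  exact h a

lemma inv_app {τ : Perm (Fin n)} (h : τ * τ = 1) (a : Fin n) : τ (τ a) = a := by
  rw [← Perm.mul_apply, h]; rfl

lemma tht_τ_comm {τ : Perm (Fin n)} (h : τ * τ = 1) (a b : Fin n) :
    Commute (tht a (τ a)) (tht b (τ b)) := by
  by_cases h1 : a = b
  · rw [h1]
  by_cases h2 : a = τ b
  · rw [h2, inv_app h, tht_symm]
  · apply tht_comm
    · exact h1
    · exact h2
    · intro e; apply h2; rw [← e, inv_app h]
    · intro e; exact h1 (τ.injective e)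

lemma Th_perm {τ : Perm (Fin n)} (h : τ * τ = 1) (l : List (Fin n)) (hl : l.Perm (List.finRange n)) :
    Th τ = (l.map (fun a => tht a (τ a))).prod := by
  unfold Th
  refine ((hl.map _).prod_eq' ?_).symm
  rw [List.pairwise_map]
  exact List.pairwise_of_forall (fun a b => tht_τ_comm h a b)

lemma sg_Th (p : Perm (Fin n)) {τ : Perm (Fin n)} (h : τ * τ = 1) :
    sg p * Th τ = Th (p * τ * p⁻¹) * sg p := by
  have h' : (p * τ * p⁻¹) * (p * τ * p⁻¹) = 1 := by
    calc (p * τ * p⁻¹) * (p * τ * p⁻¹) = p * (τ * τ) * p⁻¹ := by group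
      _ = 1 := by rw [h]; group
  rw [Th_perm h' ((List.finRange n).map p)
    (by
      rw [List.perm_ext_iff_of_nodup ((List.nodup_finRange n).map p.injective) (List.nodup_finRange n)]
      intro a
      simp only [List.mem_map, List.mem_finRange, true_and, iff_true]
      exact p.surjective a)]
  rw [sg_mul_eq_cj]
  congr 1
  unfold Th
  rw [map_list_prod, List.map_map, List.map_map]
  congr 1
  apply List.map_congr_left
  intro a _
  simp [cj_tht]

lemma mul_swap_invol {τ : Perm (Fin n)} (h : τ * τ = 1) {a b : Fin n} (ha : τ a = a) (hb : τ b = b) :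
    (τ * swap a b) * (τ * swap a b) = 1 := by
  have : swap a b * τ = τ * swap a b := by
    rw [mul_swap_eq_swap_mul, ha, hb]
  rw [mul_assoc, ← mul_assoc (swap a b), this, mul_assoc, swap_mul_self, mul_one, h]

lemma Th_mul_swap {τ : Perm (Fin n)} (h : τ * τ = 1) {a b : Fin n} (hab : a ≠ b) (ha : τ a = a)
    (hb : τ b = b) : Th (τ * swap a b) = Th τ * tht a b := by
  set l := (List.finRange n).filter (fun x => x ≠ a ∧ x ≠ b) with hl
  have hp : (a :: b :: l).Perm (List.finRange n) := by
    rw [List.perm_ext_iff_of_nodup _ (List.nodup_finRange n)]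
    · intro x
      simp [hl]
      tauto
    · simp [hl, hab, (List.nodup_finRange n).filter]
  rw [Th_perm h _ hp, Th_perm (mul_swap_invol h ha hb) _ hp]
  simp only [List.map_cons, List.prod_cons, Perm.mul_apply, swap_apply_left, swap_apply_right, ha, hb,
    tht_self, one_mul]
  rw [← mul_assoc, tht_symm b a, tht_idem]
  have : l.map (fun x => tht x (τ (swap a b x))) = l.map (fun x => tht x (τ x)) := by
    apply List.map_congr_left
    intro x hx
    simp [hl] at hx
    rw [swap_apply_of_ne_of_ne hx.1 hx.2]
  rw [this]
  apply Commute.list_prod_right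
  intro y hy
  obtain ⟨x, hx, rfl⟩ := List.mem_map.1 hy
  simp [hl] at hx
  apply tht_comm
  · exact Ne.symm hx.1
  · intro e; apply hx.1; apply τ.injective; rw [← e, ha]
  · exact Ne.symm hx.2
  · intro e; apply hx.2; apply τ.injective; rw [← e, hb]

lemma split_swap {τ : Perm (Fin n)} (h : τ * τ = 1) {a b : Fin n} (hab : a ≠ b) (hτ : τ a = b) :
    ∃ τ' : Perm (Fin n), τ' * τ' = 1 ∧ τ' a = a ∧ τ' b = b ∧ τ = τ' * swap a b := by
  have hb : τ b = a := by rw [← hτ, inv_app h]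
  refine ⟨τ * swap a b, ?_, ?_, ?_, ?_⟩
  · have : swap a b * τ = τ * swap a b := by
      rw [mul_swap_eq_swap_mul, hτ, hb, swap_comm]
    rw [mul_assoc, ← mul_assoc (swap a b), this, mul_assoc, swap_mul_self, mul_one, h]
  · simp [hb]
  · simp [hτ]
  · simp [mul_assoc]

lemma Th_ϑ {τ : Perm (Fin n)} {c : Fin n} (hc : τ c = c) : Commute (ϑP c) (Th τ) := by
  apply Th_commute
  intro a
  by_cases h : c = a
  · subst h; rw [hc, tht_self]; exact Commute.one_right _
  · apply ϑ_tht_comm _ _ _ h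
    intro e; apply h; apply τ.injective; rw [← e, hc]

lemma Th_tht {τ : Perm (Fin n)} {c d : Fin n} (hc : τ c = c) (hd : τ d = d) :
    Commute (tht c d) (Th τ) := by
  apply Th_commute
  intro a
  by_cases h : c = a
  · subst h; rw [hc, tht_self]; exact Commute.one_right _
  by_cases h' : d = a
  · subst h'; rw [hd, tht_self]; exact Commute.one_right _
  · apply tht_comm _ _ _ _ h _ h'
    · intro e; apply h'; apply τ.injective; rw [← e, hd]
    · intro e; apply h; apply τ.injective; rw [← e, hc]

/-- Elements in normal form. -/
def IsNF (w : PBMonoid n) : Prop :=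
  ∃ (τ₁ p : Perm (Fin n)) (A : Finset (Fin n)) (τ₂ : Perm (Fin n)), τ₁ * τ₁ = 1 ∧ τ₂ * τ₂ = 1 ∧
    (∀ x ∉ A, τ₁ (p x) = p x) ∧ (∀ x ∉ A, τ₂ x = x) ∧ w = Th τ₁ * (sg p * (EE A * Th τ₂))

lemma nf_one : IsNF (1 : PBMonoid n) :=
  ⟨1, 1, ∅, 1, by simp, by simp, by simp, by simp, by simp [Th_one, EE_empty]⟩

lemma nf_sg (w : PBMonoid n) (h : IsNF w) (r : Perm (Fin n)) : IsNF (w * sg r) := by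
  obtain ⟨τ₁, p, A, τ₂, h1, h2, h3, h4, rfl⟩ := h
  refine ⟨τ₁, p * r, A.map (r⁻¹).toEmbedding, r⁻¹ * τ₂ * r, h1, ?_, ?_, ?_, ?_⟩
  · calc (r⁻¹ * τ₂ * r) * (r⁻¹ * τ₂ * r) = r⁻¹ * (τ₂ * τ₂) * r := by group
      _ = 1 := by rw [h2]; group
  · intro x hx
    apply h3
    intro hr
    apply hx
    exact Finset.mem_map.2 ⟨r x, hr, by simp⟩
  · intro x hx
    rw [Perm.mul_apply, Perm.mul_apply, h4]
    · simp
    intro hr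
    apply hx
    exact Finset.mem_map.2 ⟨r x, hr, by simp⟩
  · have e1 := sg_Th r⁻¹ h2
    have e2 := sg_EE r⁻¹ A
    rw [inv_inv] at e1
    have e3 : EE A * Th τ₂ * sg r = sg r * (EE (A.map (r⁻¹).toEmbedding) * Th (r⁻¹ * τ₂ * r)) := by
      calc EE A * Th τ₂ * sg r = sg r * (sg r⁻¹ * EE A * Th τ₂ * sg r) := by
            simp only [← mul_assoc, sg_mul_inv, one_mul]
        _ = sg r * (EE (A.map (r⁻¹).toEmbedding) * (sg r⁻¹ * Th τ₂) * sg r) := by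
            rw [e2]; simp only [mul_assoc]
        _ = _ := by rw [e1]; simp only [mul_assoc, sg_inv_mul, mul_one]
    rw [map_mul, mul_assoc, mul_assoc, e3]
    simp only [mul_assoc]

lemma nf_ϑ (w : PBMonoid n) (h : IsNF w) (a : Fin n) : IsNF (w * ϑP a) := by
  obtain ⟨τ₁, p, A, τ₂, h1, h2, h3, h4, rfl⟩ := h
  by_cases ha : τ₂ a = a
  · refine ⟨τ₁, p, insert a A, τ₂, h1, h2, fun x hx => h3 x (fun hh => hx (Finset.mem_insert_of_mem hh)),
      fun x hx => h4 x (fun hh => hx (Finset.mem_insert_of_mem hh)), ?_⟩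
    rw [EE_insert, mul_assoc, mul_assoc, mul_assoc, ← (Th_ϑ ha).eq]
    simp only [mul_assoc]
  · obtain ⟨b, hb⟩ : ∃ b, τ₂ a = b := ⟨_, rfl⟩
    rw [hb] at ha
    obtain ⟨τ, g1, g2, g3, rfl⟩ := split_swap h2 (Ne.symm ha) hb
    have haA : a ∈ A := by
      by_contra hh
      have := h4 a hh
      rw [hb] at this; exact ha this
    have hbA : b ∈ A := by
      by_contra hh
      have := h4 b hh
      rw [Perm.mul_apply, swap_apply_right, g2] at this; exact ha this.symm
    refine ⟨τ₁, p, A, τ, h1, g1, h3, ?_, ?_⟩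
    · intro x hx
      have := h4 x hx
      rwa [Perm.mul_apply, swap_apply_of_ne_of_ne] at this
      · rintro rfl; exact hx haA
      · rintro rfl; exact hx hbA
    · have : EE A * Th (τ * swap a b) * ϑP a = EE A * Th τ := by
        rw [Th_mul_swap g1 (Ne.symm ha) g2 g3]
        calc EE A * (Th τ * tht a b) * ϑP a = EE A * ϑP a * (Th τ * tht a b) * ϑP a := by
              rw [EE_mem' A a haA]
          _ = EE A * (ϑP a * Th τ) * tht a b * ϑP a := by simp only [mul_assoc]
          _ = EE A * Th τ * (ϑP a * tht a b * ϑP a) := by rw [(Th_ϑ g2).eq]; simp only [mul_assoc]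
          _ = EE A * (ϑP a * ϑP b * Th τ) := by
              rw [ϑ_tht_ϑ a b (Ne.symm ha), mul_assoc, ((Th_ϑ g2).mul_left (Th_ϑ g3)).eq]
          _ = EE A * Th τ := by
              rw [← mul_assoc, ← mul_assoc, EE_mem' A a haA, EE_mem' A b hbA]
      rw [mul_assoc, mul_assoc, this]

lemma nf_tht_aux2 (w : PBMonoid n) (τ₁ p : Perm (Fin n)) (A : Finset (Fin n)) (τ₂ : Perm (Fin n))
    (h1 : τ₁ * τ₁ = 1) (h2 : τ₂ * τ₂ = 1) (h3 : ∀ x ∉ A, τ₁ (p x) = p x) (h4 : ∀ x ∉ A, τ₂ x = x)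
    (hw : w = Th τ₁ * (sg p * (EE A * Th τ₂))) (a b : Fin n) (hab : a ≠ b) (ha : τ₂ a = a) (hb : τ₂ b = b)
    (hbA : b ∈ A) : IsNF (w * tht a b) := by
  subst hw
  refine ⟨τ₁, p, insert a A, τ₂ * swap a b, h1, mul_swap_invol h2 ha hb,
    fun x hx => h3 x (fun hh => hx (Finset.mem_insert_of_mem hh)), ?_, ?_⟩
  · intro x hx
    rw [Finset.mem_insert, not_or] at hx
    rw [Perm.mul_apply, swap_apply_of_ne_of_ne hx.1, h4 x hx.2]
    rintro rfl; exact hx.2 hbA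
  · have : EE A * Th τ₂ * tht a b = EE A * ϑP a * (Th τ₂ * tht a b) := by
      rw [mul_assoc, ← (Th_tht ha hb).eq]
      calc EE A * (tht a b * Th τ₂) = EE A * ϑP b * (tht a b * Th τ₂) := by rw [EE_mem' A b hbA]
        _ = EE A * (ϑP b * tht a b) * Th τ₂ := by simp only [mul_assoc]
        _ = EE A * ϑP b * ϑP a * (tht a b * Th τ₂) := by
          rw [← ϑϑ_tht a b hab, (ϑ_comm a b).eq]; simp only [mul_assoc]
        _ = _ := by rw [EE_mem' A b hbA]
    rw [EE_insert, Th_mul_swap h2 hab ha hb, mul_assoc, mul_assoc, this]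

lemma nf_tht_aux3 (w : PBMonoid n) (τ₁ p : Perm (Fin n)) (A : Finset (Fin n)) (τ₂ : Perm (Fin n))
    (h1 : τ₁ * τ₁ = 1) (h2 : τ₂ * τ₂ = 1) (h3 : ∀ x ∉ A, τ₁ (p x) = p x) (h4 : ∀ x ∉ A, τ₂ x = x)
    (hw : w = Th τ₁ * (sg p * (EE A * Th τ₂))) (a b c : Fin n) (hab : a ≠ b) (hac : a ≠ c) (hbc : b ≠ c)
    (hc : τ₂ c = b) : IsNF (w * tht a b) := by
  subst hw
  obtain ⟨τ, g1, g2, g3, rfl⟩ := split_swap h2 hbc.symm hc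
  have hcA : c ∈ A := by
    by_contra hh
    have := h4 c hh
    rw [hc] at this; exact hbc this
  have hbA : b ∈ A := by
    by_contra hh
    have := h4 b hh
    rw [Perm.mul_apply, swap_apply_right, g2] at this; exact hbc this.symm
  set s := swap a c with hs
  have hsb : s b = b := swap_apply_of_ne_of_ne hab.symm hbc
  have hsi : s⁻¹ = s := swap_inv _ _
  have g1' : (s * τ * s) * (s * τ * s) = 1 := by
    have : s * s = 1 := swap_mul_self _ _
    calc (s * τ * s) * (s * τ * s) = s * τ * (s * s) * τ * s := by group
      _ = s * (τ * τ) * s := by rw [this]; group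
      _ = 1 := by rw [g1, mul_one, this]
  have fa : (s * τ * s) a = a := by simp [hs, g2]
  have fb : (s * τ * s) b = b := by simp [hsb, g3]
  have key : ∀ x, x ∉ A.map s.toEmbedding → s x ∉ A := by
    intro x hx hh
    exact hx (Finset.mem_map.2 ⟨s x, hh, by simp [hs]⟩)
  refine ⟨τ₁, p * s, A.map s.toEmbedding, (s * τ * s) * swap a b, h1,
    mul_swap_invol g1' fa fb, fun x hx => h3 _ (key x hx), ?_, ?_⟩
  · intro x hx
    have k := key x hx
    have xa : x ≠ a := by rintro rfl; apply k; rw [hs, swap_apply_left]; exact hcA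
    have xb : x ≠ b := by rintro rfl; apply k; rw [hsb]; exact hbA
    have := h4 _ k
    rw [Perm.mul_apply, swap_apply_of_ne_of_ne (a := c) (b := b)] at this
    · rw [Perm.mul_apply, swap_apply_of_ne_of_ne xa xb, Perm.mul_apply, Perm.mul_apply, this]
      simp [hs]
    · intro e; rw [e] at k; exact k hcA
    · intro e; rw [e] at k; exact k hbA
  · have e1 := sg_Th s g1'
    have e0 : s * (s * τ * s) * s⁻¹ = τ := by
      have : s * s = 1 := swap_mul_self _ _
      rw [← mul_assoc, ← mul_assoc, this, one_mul, mul_assoc, mul_inv_cancel, mul_one]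
    rw [e0] at e1
    have e2 := sg_EE s (A.map s.toEmbedding)
    have e3 : (A.map s.toEmbedding).map s.toEmbedding = A := by
      rw [Finset.map_map]
      convert Finset.map_refl
      ext x
      simp [hs]
    rw [e3] at e2
    have : EE A * Th (τ * swap c b) * tht a b =
        sg s * (EE (A.map s.toEmbedding) * Th (s * τ * s * swap a b)) := by
      rw [Th_mul_swap g1 hbc.symm g2 g3, Th_mul_swap g1' hab fa fb]
      calc EE A * (Th τ * tht c b) * tht a b = EE A * Th τ * (tht c b * tht a b) := by simp only [mul_assoc]
        _ = EE A * (Th τ * sg s) * tht a b := by rw [tht_tht a b c hab hac hbc]; simp only [mul_assoc, hs]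
        _ = (EE A * sg s) * Th (s * τ * s) * tht a b := by rw [← e1]; simp only [mul_assoc]
        _ = _ := by rw [← e2]; simp only [mul_assoc]
    rw [mul_assoc, mul_assoc, this, map_mul]
    simp only [mul_assoc]

lemma nf_tht (w : PBMonoid n) (h : IsNF w) (a b : Fin n) (hab : a ≠ b) : IsNF (w * tht a b) := by
  obtain ⟨τ₁, p, A, τ₂, h1, h2, h3, h4, hw⟩ := h
  by_cases hba : τ₂ b = a
  · obtain ⟨τ, g1, g2, g3, rfl⟩ := split_swap h2 hab.symm hba
    refine ⟨τ₁, p, A, _, h1, h2, h3, h4, ?_⟩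
    rw [hw, Th_mul_swap g1 hab.symm g2 g3, tht_symm b a]
    simp only [mul_assoc, tht_idem]
  by_cases hb : τ₂ b = b
  · by_cases ha : τ₂ a = a
    · by_cases hbA : b ∈ A
      · exact nf_tht_aux2 w τ₁ p A τ₂ h1 h2 h3 h4 hw a b hab ha hb hbA
      by_cases haA : a ∈ A
      · rw [tht_symm]
        exact nf_tht_aux2 w τ₁ p A τ₂ h1 h2 h3 h4 hw b a hab.symm hb ha haA
      · subst hw
        have hpab : p a ≠ p b := fun e => hab (p.injective e)
        refine ⟨τ₁ * swap (p a) (p b), p, insert b (insert a A), τ₂ * swap a b,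
          mul_swap_invol h1 (h3 a haA) (h3 b hbA), mul_swap_invol h2 ha hb, ?_, ?_, ?_⟩
        · intro x hx
          simp only [Finset.mem_insert, not_or] at hx
          rw [Perm.mul_apply, swap_apply_of_ne_of_ne (fun e => hx.2.1 (p.injective e))
            (fun e => hx.1 (p.injective e)), h3 x hx.2.2]
        · intro x hx
          simp only [Finset.mem_insert, not_or] at hx
          rw [Perm.mul_apply, swap_apply_of_ne_of_ne hx.2.1 hx.1, h4 x hx.2.2]
        · rw [Th_mul_swap h1 hpab (h3 a haA) (h3 b hbA), Th_mul_swap h2 hab ha hb, EE_insert, EE_insert]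
          have e1 : tht (p a) (p b) * sg p = sg p * tht a b := by rw [sg_mul_eq_cj, cj_tht]
          have e2 : Commute (tht a b) (EE A) := EE_commute _ _ (fun c hc =>
            (ϑ_tht_comm a b c (fun e => haA (e ▸ hc)) (fun e => hbA (e ▸ hc))).symm)
          symm
          calc Th τ₁ * tht (p a) (p b) * (sg p * (EE A * ϑP a * ϑP b * (Th τ₂ * tht a b)))
              = Th τ₁ * (tht (p a) (p b) * sg p) * (EE A * ϑP a * ϑP b * (Th τ₂ * tht a b)) := by
                simp only [mul_assoc]
            _ = Th τ₁ * sg p * (tht a b * EE A) * ϑP a * ϑP b * (tht a b * Th τ₂) := by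
                rw [e1, (Th_tht ha hb).eq]; simp only [mul_assoc]
            _ = Th τ₁ * sg p * EE A * (tht a b * ϑP a * ϑP b * tht a b) * Th τ₂ := by
                rw [e2.eq]; simp only [mul_assoc]
            _ = Th τ₁ * sg p * EE A * (tht a b * Th τ₂) := by
                rw [tht_ϑϑ_tht a b hab]; simp only [mul_assoc]
            _ = _ := by rw [(Th_tht ha hb).eq]; simp only [mul_assoc]
    · rw [tht_symm]
      refine nf_tht_aux3 w τ₁ p A τ₂ h1 h2 h3 h4 hw b a (τ₂ a) hab.symm ?_ (Ne.symm ha) (inv_app h2 a)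
      intro e; apply hba; rw [e, inv_app h2]
  · exact nf_tht_aux3 w τ₁ p A τ₂ h1 h2 h3 h4 hw a b (τ₂ b) hab (Ne.symm hba) (Ne.symm hb) (inv_app h2 b)

theorem nf_all (w : PBMonoid n) : IsNF w := by
  have hw : w ∈ Submonoid.closure (Set.range (PresentedMonoid.of (PBRel n))) := by
    rw [PresentedMonoid.closure_range_of]; trivial
  induction hw using Submonoid.closure_induction_right with
  | one => exact nf_one
  | mul_right x y _ hy ih =>
    obtain ⟨g, rfl⟩ := hy
    rcases g with i | i | j
    · have := nf_sg x ih (swap (lo i) (hi i))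
      rwa [sg_adj] at this
    · have := nf_tht x ih (lo i) (hi i) (lo_ne_hi i)
      rwa [tht_adj] at this
    · exact nf_ϑ x ih j

end NF

section Rep
open Equiv
variable {n : ℕ}

/-- the monoid of binary relations on Boolean vectors. -/
@[ext] structure RelM (n : ℕ) where
  /-- the relation -/
  r : (Fin n → Bool) → (Fin n → Bool) → Prop

instance : Monoid (RelM n) where
  mul x y := ⟨fun f g => ∃ h, x.r f h ∧ y.r h g⟩
  one := ⟨fun f g => f = g⟩
  mul_assoc x y z := by
    apply RelM.ext; funext f g
    apply propext
    constructor
    · rintro ⟨h, ⟨k, h1, h2⟩, h3⟩; exact ⟨k, h1, h, h2, h3⟩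
    · rintro ⟨k, h1, h, h2, h3⟩; exact ⟨h, ⟨k, h1, h2⟩, h3⟩
  one_mul x := by
    apply RelM.ext; funext f g
    apply propext
    constructor
    · rintro ⟨h, h1, h2⟩; cases h1; exact h2
    · intro h; exact ⟨f, rfl, h⟩
  mul_one x := by
    apply RelM.ext; funext f g
    apply propext
    constructor
    · rintro ⟨h, h1, h2⟩; cases h2; exact h1
    · intro h; exact ⟨g, h, rfl⟩

lemma rel_mul (x y : RelM n) (f g) : (x * y).r f g ↔ ∃ h, x.r f h ∧ y.r h g := Iff.rfl
lemma rel_one (f g : Fin n → Bool) : (1 : RelM n).r f g ↔ f = g := Iff.rfl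

lemma rel_ext {x y : RelM n} (h : ∀ f g, x.r f g ↔ y.r f g) : x = y := by
  apply RelM.ext; funext f g; exact propext (h f g)

/-- overwrite at two points -/
def up2 (f : Fin n → Bool) (a b : Fin n) (x : Bool) : Fin n → Bool :=
  fun c => if c = a then x else if c = b then x else f c
/-- swap two points -/
def sw2 (f : Fin n → Bool) (a b : Fin n) : Fin n → Bool :=
  fun c => if c = a then f b else if c = b then f a else f c

/-- transposition relation -/
def rS (a b : Fin n) : RelM n := ⟨fun f g => g = sw2 f a b⟩
/-- cup-cap relation -/
def rT (a b : Fin n) : RelM n := ⟨fun f g => f a = f b ∧ ∃ x, g = up2 f a b x⟩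
/-- cut relation -/
def rV (a : Fin n) : RelM n := ⟨fun f g => ∃ x, g = up2 f a a x⟩

lemma rS_r (a b : Fin n) (f g) : (rS a b).r f g ↔ ∀ c, g c = sw2 f a b c := by
  rw [← funext_iff]; rfl
lemma rT_r (a b : Fin n) (f g) : (rT a b).r f g ↔ f a = f b ∧
    ((∀ c, g c = up2 f a b false c) ∨ (∀ c, g c = up2 f a b true c)) := by
  simp only [← funext_iff, rT, Bool.exists_bool]
lemma rV_r (a : Fin n) (f g) : (rV a).r f g ↔
    ((∀ c, g c = up2 f a a false c) ∨ (∀ c, g c = up2 f a a true c)) := by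
  simp only [← funext_iff, rV, Bool.exists_bool]
lemma rS_m (a b : Fin n) (w : RelM n) (f g) : (rS a b * w).r f g ↔ w.r (sw2 f a b) g := by
  constructor
  · rintro ⟨h, rfl, h⟩; exact h
  · intro h; exact ⟨_, rfl, h⟩
lemma rT_m (a b : Fin n) (w : RelM n) (f g) : (rT a b * w).r f g ↔
    f a = f b ∧ (w.r (up2 f a b false) g ∨ w.r (up2 f a b true) g) := by
  rw [← Bool.exists_bool (p := fun x => w.r (up2 f a b x) g)]
  constructor
  · rintro ⟨h, ⟨h1, x, rfl⟩, h⟩; exact ⟨h1, x, h⟩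
  · rintro ⟨h1, x, h⟩; exact ⟨_, ⟨h1, x, rfl⟩, h⟩
lemma rV_m (a : Fin n) (w : RelM n) (f g) : (rV a * w).r f g ↔
    (w.r (up2 f a a false) g ∨ w.r (up2 f a a true) g) := by
  rw [← Bool.exists_bool (p := fun x => w.r (up2 f a a x) g)]
  constructor
  · rintro ⟨h, ⟨x, rfl⟩, h⟩; exact ⟨x, h⟩
  · rintro ⟨x, h⟩; exact ⟨_, ⟨x, rfl⟩, h⟩
lemma rel_one' (f g : Fin n → Bool) : (1 : RelM n).r f g ↔ ∀ c, g c = f c := by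
  rw [← funext_iff]; exact eq_comm

/-- the images of generators -/
def rG : PBGen n → RelM n
  | Sum.inl i => rS (lo i) (hi i)
  | Sum.inr (Sum.inl i) => rT (lo i) (hi i)
  | Sum.inr (Sum.inr j) => rV j

lemma rS_symm (a b : Fin n) : rS a b = rS b a := by
  apply rel_ext; intro f g; simp only [rS_r, sw2]; grind
lemma rT_symm (a b : Fin n) : rT a b = rT b a := by
  apply rel_ext; intro f g; simp only [rT_r, up2]; grind

lemma rr1 (a b : Fin n) : rS a b * rS a b = 1 := by
  apply rel_ext; intro f g; simp only [rS_m, rS_r, rel_one', sw2]; grind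
lemma rr2 (a b c d : Fin n) (h1 : a ≠ c) (h2 : a ≠ d) (h3 : b ≠ c) (h4 : b ≠ d) :
    rS a b * rS c d = rS c d * rS a b := by
  apply rel_ext; intro f g; simp only [rS_m, rS_r, sw2]; grind
lemma rr3 (a b c : Fin n) (h1 : a ≠ b) (h2 : a ≠ c) (h3 : b ≠ c) :
    rS a b * rS b c * rS a b = rS b c * rS a b * rS b c := by
  apply rel_ext; intro f g; simp only [mul_assoc, rS_m, rS_r, sw2]; grind
lemma rr4 (a b : Fin n) : rT a b * rT a b = rT a b := by
  apply rel_ext; intro f g; simp only [rT_m, rT_r, up2]; grind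
lemma rr5 (a b c d : Fin n) (h1 : a ≠ c) (h2 : a ≠ d) (h3 : b ≠ c) (h4 : b ≠ d) :
    rT a b * rT c d = rT c d * rT a b := by
  have e : ∀ (f : Fin n → Bool) x y, up2 (up2 f a b x) c d y = up2 (up2 f c d y) a b x := by
    intro f x y; funext z; simp only [up2]; grind
  have e1 : ∀ (f : Fin n → Bool) x, up2 f a b x c = f c ∧ up2 f a b x d = f d := by
    intro f x; simp only [up2]; grind
  have e2 : ∀ (f : Fin n → Bool) x, up2 f c d x a = f a ∧ up2 f c d x b = f b := by
    intro f x; simp only [up2]; grind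
  apply rel_ext; intro f g; simp only [rT_m, rT_r, e, e1, e2]; tauto
lemma rr6 (a b c : Fin n) (h1 : a ≠ b) (h2 : a ≠ c) (h3 : b ≠ c) :
    rT a b * rT b c * rT a b = rT a b := by
  apply rel_ext; intro f g; simp only [mul_assoc, rT_m, rT_r, up2]; grind
lemma rr7 (a b : Fin n) : rT a b * rS a b = rT a b := by
  apply rel_ext; intro f g; simp only [rT_m, rT_r, rS_m, rS_r, sw2, up2]; grind
lemma rr8 (a b : Fin n) : rS a b * rT a b = rT a b := by
  apply rel_ext; intro f g; simp only [rT_m, rT_r, rS_m, rS_r, sw2, up2]; grind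
lemma rr9 (a b c d : Fin n) (h1 : a ≠ c) (h2 : a ≠ d) (h3 : b ≠ c) (h4 : b ≠ d) :
    rT a b * rS c d = rS c d * rT a b := by
  apply rel_ext; intro f g; simp only [rT_m, rT_r, rS_m, rS_r, sw2, up2]; grind
lemma rr10 (a b c : Fin n) (h1 : a ≠ b) (h2 : a ≠ c) (h3 : b ≠ c) :
    rS a b * rT b c * rT a b = rS b c * rT a b := by
  apply rel_ext; intro f g; simp only [mul_assoc, rT_m, rT_r, rS_m, rS_r, sw2, up2]; grind
lemma rr11 (a b c : Fin n) (h1 : a ≠ b) (h2 : a ≠ c) (h3 : b ≠ c) :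
    rT a b * rT b c * rS a b = rT a b * rS b c := by
  apply rel_ext; intro f g; simp only [mul_assoc, rT_m, rT_r, rS_m, rS_r, sw2, up2]; grind
lemma rr12 (a : Fin n) : rV a * rV a = rV a := by
  apply rel_ext; intro f g; simp only [rV_m, rV_r, up2]; grind
lemma rr13 (a b : Fin n) (h : a ≠ b) : rV a * rV b = rV b * rV a := by
  apply rel_ext; intro f g; simp only [rV_m, rV_r, up2]; grind
lemma rr14 (a b : Fin n) (h : a ≠ b) : rS a b * rV a = rV b * rS a b := by
  apply rel_ext; intro f g; simp only [rV_m, rV_r, rS_m, rS_r, sw2, up2]; grind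
lemma rr15 (a b c : Fin n) (h1 : c ≠ a) (h2 : c ≠ b) : rS a b * rV c = rV c * rS a b := by
  apply rel_ext; intro f g; simp only [rV_m, rV_r, rS_m, rS_r, sw2, up2]; grind
lemma rr16 (a b : Fin n) (h : a ≠ b) : rV a * rS a b * rV a = rV a * rV b := by
  apply rel_ext; intro f g; simp only [mul_assoc, rV_m, rV_r, rS_m, rS_r, sw2, up2]; grind
lemma rr17 (a b c : Fin n) (h1 : c ≠ a) (h2 : c ≠ b) : rT a b * rV c = rV c * rT a b := by
  have e : ∀ (f : Fin n → Bool) x y, up2 (up2 f a b x) c c y = up2 (up2 f c c y) a b x := by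
    intro f x y; funext z; simp only [up2]; grind
  have e2 : ∀ (f : Fin n → Bool) x, up2 f c c x a = f a ∧ up2 f c c x b = f b := by
    intro f x; simp only [up2]; grind
  apply rel_ext; intro f g; simp only [rV_m, rV_r, rT_m, rT_r, e, e2]; tauto
lemma rr18 (a b : Fin n) (h : a ≠ b) : rT a b * rV a = rT a b * rV b := by
  apply rel_ext; intro f g; simp only [mul_assoc, rV_m, rV_r, rT_m, rT_r, up2]; grind
lemma rr19 (a b : Fin n) (h : a ≠ b) : rT a b * rV a = rT a b * rV a * rV b := by
  rw [rr18 a b h, mul_assoc, rr12]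
lemma rr20 (a b : Fin n) (h : a ≠ b) : rV a * rT a b = rV b * rT a b := by
  apply rel_ext; intro f g; simp only [mul_assoc, rV_m, rV_r, rT_m, rT_r, up2]; grind
lemma rr21 (a b : Fin n) (h : a ≠ b) : rV a * rT a b = rV a * rV b * rT a b := by
  apply rel_ext; intro f g; simp only [mul_assoc, rV_m, rV_r, rT_m, rT_r, up2]; grind
lemma rr22 (a b : Fin n) (h : a ≠ b) : rT a b * rV a * rT a b = rT a b := by
  apply rel_ext; intro f g; simp only [mul_assoc, rV_m, rV_r, rT_m, rT_r, up2]; grind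
lemma rr23 (a b : Fin n) (h : a ≠ b) : rV a * rT a b * rV a = rV a * rV b := by
  apply rel_ext; intro f g; simp only [mul_assoc, rV_m, rV_r, rT_m, rT_r, up2]; grind

lemma rcase {P : Fin n → Fin n → Fin n → Fin n → Prop} (i j : Fin (n-1)) (h : Nat.dist i.1 j.1 = 1)
    (hs : ∀ a b c d, P a b c d → P b a d c)
    (hP : ∀ a b c : Fin n, a ≠ b → a ≠ c → b ≠ c → P a b b c) : P (lo i) (hi i) (lo j) (hi j) := by
  have hij : i.1 + 1 = j.1 ∨ j.1 + 1 = i.1 := by simp only [Nat.dist] at h; omega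
  rcases hij with hij | hij
  · have e : hi i = lo j := Fin.ext hij
    rw [← e]
    apply hP
    · exact lo_ne_hi i
    · simp [lo, hi]; omega
    · rw [e]; exact lo_ne_hi j
  · have e : hi j = lo i := Fin.ext hij
    apply hs
    rw [e]
    apply hP
    · exact (lo_ne_hi i).symm
    · simp [lo, hi]; omega
    · rw [← e]; exact (lo_ne_hi j).symm

lemma rfar (i j : Fin (n-1)) (h : 1 < Nat.dist i.1 j.1) :
    lo i ≠ lo j ∧ lo i ≠ hi j ∧ hi i ≠ lo j ∧ hi i ≠ hi j := by
  simp only [Nat.dist] at h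
  simp only [lo, hi, ne_eq, Fin.mk.injEq]
  omega

lemma rG_rel (a b : FreeMonoid (PBGen n)) (h : PBRel n a b) :
    FreeMonoid.lift (rG (n := n)) a = FreeMonoid.lift rG b := by
  cases h with
  | sigma_sq i => exact rr1 _ _
  | sigma_comm i j h => obtain ⟨h1, h2, h3, h4⟩ := rfar i j h; exact rr2 _ _ _ _ h1 h2 h3 h4
  | braid i j h =>
    exact rcase (P := fun a b c d => rS a b * rS c d * rS a b = rS c d * rS a b * rS c d) i j h
      (fun a b c d h => by rwa [rS_symm b a, rS_symm d c]) rr3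
  | theta_idem i => exact rr4 _ _
  | theta_comm i j h => obtain ⟨h1, h2, h3, h4⟩ := rfar i j h; exact rr5 _ _ _ _ h1 h2 h3 h4
  | theta_theta_theta i j h =>
    exact rcase (P := fun a b c d => rT a b * rT c d * rT a b = rT a b) i j h
      (fun a b c d h => by rwa [rT_symm b a, rT_symm d c]) rr6
  | theta_sigma i => exact rr7 _ _
  | sigma_theta i => exact rr8 _ _
  | theta_sigma_comm i j h => obtain ⟨h1, h2, h3, h4⟩ := rfar i j h; exact rr9 _ _ _ _ h1 h2 h3 h4
  | sigma_theta_theta i j h =>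
    exact rcase (P := fun a b c d => rS a b * rT c d * rT a b = rS c d * rT a b) i j h
      (fun a b c d h => by rwa [rS_symm b a, rS_symm d c, rT_symm b a, rT_symm d c]) rr10
  | theta_theta_sigma i j h =>
    exact rcase (P := fun a b c d => rT a b * rT c d * rS a b = rT a b * rS c d) i j h
      (fun a b c d h => by rwa [rS_symm b a, rS_symm d c, rT_symm b a, rT_symm d c]) rr11
  | v_idem j => exact rr12 _
  | v_comm j j' h => exact rr13 _ _ h
  | sigma_v i => exact rr14 _ _ (lo_ne_hi i)
  | sigma_v_comm i j h h' => exact rr15 _ _ _ h h'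
  | v_sigma_v i => exact rr16 _ _ (lo_ne_hi i)
  | theta_v_comm i j h h' => exact rr17 _ _ _ h h'
  | theta_v i => exact rr18 _ _ (lo_ne_hi i)
  | theta_vv i => exact rr19 _ _ (lo_ne_hi i)
  | v_theta i => exact rr20 _ _ (lo_ne_hi i)
  | vv_theta i => exact rr21 _ _ (lo_ne_hi i)
  | theta_v_theta i => exact rr22 _ _ (lo_ne_hi i)
  | v_theta_v i => exact rr23 _ _ (lo_ne_hi i)

/-- the representation by relations. -/
def rho : PBMonoid n →* RelM n := PresentedMonoid.lift rG rG_rel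

lemma rho_σ (i : Fin (n-1)) : rho (σP i) = rS (lo i) (hi i) := rfl
lemma rho_θ (i : Fin (n-1)) : rho (θP i) = rT (lo i) (hi i) := rfl
lemma rho_ϑ (j : Fin n) : rho (ϑP j) = rV j := rfl

end Rep

section Rep2
open Equiv
variable {n : ℕ}

lemma rho_sg (p : Perm (Fin n)) : ∀ f g, (rho (sg p)).r f g ↔ g = f ∘ p := by
  induction p using adj_induction with
  | h1 => intro f g; rw [map_one, map_one, rel_one]; exact eq_comm
  | hm p q hp hq =>
    intro f g
    rw [map_mul, map_mul, rel_mul]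
    simp only [hp, hq, exists_eq_left]
    rfl
  | hs i =>
    intro f g
    rw [sg_adj, rho_σ]
    have : sw2 f (lo i) (hi i) = f ∘ (swap (lo i) (hi i)) := by
      funext c; simp only [sw2, Function.comp, swap_apply_def]; split_ifs <;> rfl
    rw [← this]; rfl

lemma rho_tht {a b : Fin n} (h : a ≠ b) : rho (tht a b) = rT a b := by
  obtain ⟨p, i, rfl, rfl⟩ := exists_of_ne h
  rw [tht_eq, map_mul, map_mul, rho_θ]
  apply rel_ext
  intro f g
  rw [mul_assoc, rel_mul]
  simp only [rho_sg, exists_eq_left, rel_mul]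
  have key : ∀ x, up2 (f ∘ p) (lo i) (hi i) x ∘ (p⁻¹ : Perm (Fin n)) = up2 f (p (lo i)) (p (hi i)) x := by
    intro x; funext c
    simp [up2, Equiv.symm_apply_eq, Function.comp]
  constructor
  · rintro ⟨h, ⟨h1, x, rfl⟩, rfl⟩
    exact ⟨h1, x, key x⟩
  · rintro ⟨h1, x, rfl⟩
    exact ⟨_, ⟨h1, x, rfl⟩, (key x).symm⟩

lemma rho_tht_of (a b : Fin n) (f g) (h : (rho (tht a b)).r f g) :
    f a = f b ∧ g a = g b ∧ (a = b → f = g) ∧ ∀ c, c ≠ a → c ≠ b → f c = g c := by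
  by_cases hab : a = b
  · subst hab
    rw [tht_self, map_one, rel_one] at h
    subst h
    simp
  · rw [rho_tht hab] at h
    obtain ⟨h1, x, rfl⟩ := h
    refine ⟨h1, by simp [up2], fun h => absurd h hab, fun c hc hd => by simp [up2, hc, hd]⟩

lemma rho_tht_refl (a b : Fin n) (f : Fin n → Bool) (h : f a = f b) : (rho (tht a b)).r f f := by
  by_cases hab : a = b
  · subst hab
    rw [tht_self, map_one, rel_one]
  · rw [rho_tht hab]
    refine ⟨h, f a, ?_⟩
    funext c
    simp only [up2]
    grind

lemma rho_Th_left {τ : Perm (Fin n)} (hτ : τ * τ = 1) (f g) (h : (rho (Th τ)).r f g) (a : Fin n) :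
    f (τ a) = f a := by
  by_cases hab : a = τ a
  · rw [← hab]
  obtain ⟨τ', h1, h2, h3, h4⟩ := split_swap hτ hab rfl
  have e := Th_mul_swap h1 hab h2 h3
  rw [← h4, ← (Th_tht h2 h3).eq] at e
  rw [e, map_mul] at h
  obtain ⟨k, hk, _⟩ := h
  exact (rho_tht_of _ _ _ _ hk).1.symm

lemma rho_Th_right {τ : Perm (Fin n)} (hτ : τ * τ = 1) (f g) (h : (rho (Th τ)).r f g) (a : Fin n) :
    g (τ a) = g a := by
  by_cases hab : a = τ a
  · rw [← hab]
  obtain ⟨τ', h1, h2, h3, h4⟩ := split_swap hτ hab rfl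
  have e := Th_mul_swap h1 hab h2 h3
  rw [← h4] at e
  rw [e, map_mul] at h
  obtain ⟨k, _, hk⟩ := h
  exact (rho_tht_of _ _ _ _ hk).2.1.symm

lemma rho_Th_fix (τ : Perm (Fin n)) (c : Fin n) (hc : τ c = c) : ∀ f g,
    (rho (Th τ)).r f g → f c = g c := by
  unfold Th
  generalize List.finRange n = l
  induction l with
  | nil => intro f g h; simp only [List.map_nil, List.prod_nil, map_one, rel_one] at h; rw [h]
  | cons a l ih =>
    intro f g h
    rw [List.map_cons, List.prod_cons, map_mul] at h
    obtain ⟨k, h1, h2⟩ := h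
    rw [← ih _ _ h2]
    obtain ⟨_, _, h3, h4⟩ := rho_tht_of _ _ _ _ h1
    by_cases hca : c = a
    · subst hca; rw [h3 hc.symm]
    · apply h4 _ hca
      intro e
      apply hca
      apply τ.injective
      rw [hc, ← e]

lemma rho_Th_refl (τ : Perm (Fin n)) (f : Fin n → Bool) (hf : ∀ a, f (τ a) = f a) :
    (rho (Th τ)).r f f := by
  unfold Th
  generalize List.finRange n = l
  induction l with
  | nil => simp only [List.map_nil, List.prod_nil, map_one, rel_one]
  | cons a l ih =>
    rw [List.map_cons, List.prod_cons, map_mul]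
    exact ⟨f, rho_tht_refl _ _ _ (hf a).symm, ih⟩

lemma rho_EE (A : Finset (Fin n)) : ∀ f g, (rho (EE A)).r f g ↔ ∀ c ∉ A, f c = g c := by
  induction A using Finset.induction_on with
  | empty => intro f g; rw [EE_empty, map_one, rel_one, funext_iff]; simp
  | insert a A _ ih =>
    intro f g
    rw [EE_insert, map_mul, rel_mul]
    simp only [ih, rho_ϑ]
    constructor
    · rintro ⟨h, h1, x, rfl⟩ c hc
      rw [Finset.mem_insert, not_or] at hc
      simp [up2, hc.1, h1 c hc.2]
    · intro h
      refine ⟨fun c => if c = a then f a else g c, ?_, g a, ?_⟩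
      · intro c hc
        by_cases hca : c = a
        · simp [hca]
        · simp [hca, h c (by simp [hca, hc])]
      · funext c
        by_cases hca : c = a
        · simp [up2, hca]
        · simp [up2, hca]

lemma rho_nf {τ₁ p : Perm (Fin n)} {A : Finset (Fin n)} {τ₂ : Perm (Fin n)}
    (h1 : τ₁ * τ₁ = 1) (h2 : τ₂ * τ₂ = 1) (h3 : ∀ x ∉ A, τ₁ (p x) = p x) (h4 : ∀ x ∉ A, τ₂ x = x)
    (f g : Fin n → Bool) :
    (rho (Th τ₁ * (sg p * (EE A * Th τ₂)))).r f g ↔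
      (∀ a, f (τ₁ a) = f a) ∧ (∀ a, g (τ₂ a) = g a) ∧ ∀ b ∉ A, f (p b) = g b := by
  simp only [map_mul, rel_mul, rho_sg, rho_EE, exists_eq_left]
  constructor
  · rintro ⟨h, a1, k, a2, a3⟩
    refine ⟨rho_Th_left h1 _ _ a1, rho_Th_right h2 _ _ a3, fun b hb => ?_⟩
    rw [rho_Th_fix _ _ (h3 b hb) _ _ a1, ← rho_Th_fix _ _ (h4 b hb) _ _ a3, ← a2 b hb]
    rfl
  · rintro ⟨a1, a2, a3⟩
    exact ⟨f, rho_Th_refl _ _ a1, g, a3, rho_Th_refl _ _ a2⟩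

/-- relation data of a normal form -/
def nfR (τ₁ p : Perm (Fin n)) (A : Finset (Fin n)) (τ₂ : Perm (Fin n)) (f g : Fin n → Bool) : Prop :=
  (∀ a, f (τ₁ a) = f a) ∧ (∀ a, g (τ₂ a) = g a) ∧ ∀ b ∉ A, f (p b) = g b

/-- indicator of an orbit -/
def ind (τ : Perm (Fin n)) (a : Fin n) : Fin n → Bool := fun c => decide (c = a ∨ c = τ a)

lemma ind_inv {τ : Perm (Fin n)} (h : τ * τ = 1) (a b : Fin n) : ind τ a (τ b) = ind τ a b := by
  have h' : ∀ x, τ (τ x) = x := inv_app h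
  simp only [ind, decide_eq_decide]
  constructor
  · rintro (h | h)
    · right; rw [← h, h']
    · left; exact τ.injective h
  · rintro (rfl | rfl)
    · right; rfl
    · left; rw [h']

lemma ex_right {τ₁ p : Perm (Fin n)} {A : Finset (Fin n)} {τ₂ : Perm (Fin n)}
    (h3 : ∀ x ∉ A, τ₁ (p x) = p x)
    (g : Fin n → Bool) (hg : ∀ a, g (τ₂ a) = g a) : ∃ f, nfR τ₁ p A τ₂ f g := by
  classical
  have hpi : ∀ c, p (p⁻¹ c) = c := p.apply_symm_apply
  refine ⟨fun c => if p⁻¹ c ∈ A then false else g (p⁻¹ c), ?_, hg, ?_⟩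
  · intro a
    by_cases ha : p⁻¹ a ∈ A
    · by_cases ha' : p⁻¹ (τ₁ a) ∈ A
      · simp only [ha, ha', if_true]
      · have := h3 _ ha'
        rw [hpi] at this
        rw [τ₁.injective this] at ha'
        exact absurd ha ha'
    · have := h3 _ ha
      rw [hpi] at this
      rw [this]
  · intro b hb; simp [hb]

lemma ex_left {τ₁ p : Perm (Fin n)} {A : Finset (Fin n)} {τ₂ : Perm (Fin n)}
    (h4 : ∀ x ∉ A, τ₂ x = x)
    (f : Fin n → Bool) (hf : ∀ a, f (τ₁ a) = f a) : ∃ g, nfR τ₁ p A τ₂ f g := by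
  classical
  refine ⟨fun c => if c ∈ A then false else f (p c), hf, ?_, ?_⟩
  · intro a
    by_cases ha : a ∈ A
    · by_cases ha' : τ₂ a ∈ A
      · simp only [ha, ha', if_true]
      · rw [τ₂.injective (h4 _ ha')] at ha'
        exact absurd ha ha'
    · rw [h4 _ ha]
  · intro b hb; simp [hb]

lemma inv_ext {τ τ' : Perm (Fin n)} (h : τ * τ = 1) (h' : τ' * τ' = 1)
    (H : ∀ f : Fin n → Bool, (∀ a, f (τ a) = f a) ↔ (∀ a, f (τ' a) = f a)) : τ = τ' := by
  ext a
  congr 1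
  have e1 := (H (ind τ a)).1 (ind_inv h a) a
  have e2 := (H (ind τ' a)).2 (ind_inv h' a) a
  simp only [ind, decide_eq_decide, true_or, iff_true] at e1 e2
  rcases e1 with e1 | e1
  · rw [e1] at e2 ⊢; simpa using e2
  · exact e1.symm

lemma nfR_inj {τ₁ p : Perm (Fin n)} {A : Finset (Fin n)} {τ₂ : Perm (Fin n)}
    (h1 : τ₁ * τ₁ = 1) (h2 : τ₂ * τ₂ = 1) (h3 : ∀ x ∉ A, τ₁ (p x) = p x) (h4 : ∀ x ∉ A, τ₂ x = x)
    {τ₁' p' : Perm (Fin n)} {A' : Finset (Fin n)} {τ₂' : Perm (Fin n)}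
    (h1' : τ₁' * τ₁' = 1) (h2' : τ₂' * τ₂' = 1) (h3' : ∀ x ∉ A', τ₁' (p' x) = p' x)
    (h4' : ∀ x ∉ A', τ₂' x = x)
    (H : ∀ f g, nfR τ₁ p A τ₂ f g ↔ nfR τ₁' p' A' τ₂' f g) :
    τ₁ = τ₁' ∧ τ₂ = τ₂' ∧ A = A' ∧ ∀ b ∉ A, p b = p' b := by
  have t1 : τ₁ = τ₁' := by
    apply inv_ext h1 h1'
    intro f
    constructor
    · intro hf; obtain ⟨g, hg⟩ := ex_left (p := p) h4 f hf; exact ((H _ _).1 hg).1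
    · intro hf; obtain ⟨g, hg⟩ := ex_left (p := p') h4' f hf; exact ((H _ _).2 hg).1
  have t2 : τ₂ = τ₂' := by
    apply inv_ext h2 h2'
    intro f
    constructor
    · intro hf; obtain ⟨g, hg⟩ := ex_right h3 f hf; exact ((H _ _).1 hg).2.1
    · intro hf; obtain ⟨g, hg⟩ := ex_right h3' f hf; exact ((H _ _).2 hg).2.1
  subst t1 t2
  have key : ∀ (p p' : Perm (Fin n)) (A A' : Finset (Fin n)), (∀ x ∉ A, τ₂ x = x) →
      (∀ f g, nfR τ₁ p' A' τ₂ f g → nfR τ₁ p A τ₂ f g) → A' ⊆ A := by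
    intro p p' A A' h4 H b hb
    by_contra hbA
    have : nfR τ₁ p' A' τ₂ (fun _ => false) (ind τ₂ b) := by
      refine ⟨fun _ => rfl, ind_inv h2 b, fun c hc => ?_⟩
      symm
      simp only [ind, decide_eq_false_iff_not, not_or, h4 b hbA, and_self]
      rintro rfl
      exact hc hb
    have := (H _ _ this).2.2 b hbA
    simp [ind] at this
  have tA : A = A' := by
    apply Finset.Subset.antisymm
    · exact key p' p A' A h4' (fun f g => (H f g).1)
    · exact key p p' A A' h4 (fun f g => (H f g).2)
  subst tA
  refine ⟨rfl, rfl, rfl, fun b hb => ?_⟩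
  obtain ⟨g, hg⟩ := ex_left (p := p) h4 (ind τ₁ (p b)) (ind_inv h1 _)
  have e1 := hg.2.2 b hb
  have e2 := ((H _ _).1 hg).2.2 b hb
  rw [← e1] at e2
  simp only [ind, true_or, decide_true, decide_eq_true_eq, h3 b hb, or_self] at e2
  exact e2.symm

lemma nf_inj {τ₁ p : Perm (Fin n)} {A : Finset (Fin n)} {τ₂ : Perm (Fin n)}
    (h1 : τ₁ * τ₁ = 1) (h2 : τ₂ * τ₂ = 1) (h3 : ∀ x ∉ A, τ₁ (p x) = p x) (h4 : ∀ x ∉ A, τ₂ x = x)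
    {τ₁' p' : Perm (Fin n)} {A' : Finset (Fin n)} {τ₂' : Perm (Fin n)}
    (h1' : τ₁' * τ₁' = 1) (h2' : τ₂' * τ₂' = 1) (h3' : ∀ x ∉ A', τ₁' (p' x) = p' x)
    (h4' : ∀ x ∉ A', τ₂' x = x)
    (H : Th τ₁ * (sg p * (EE A * Th τ₂)) = Th τ₁' * (sg p' * (EE A' * Th τ₂'))) :
    τ₁ = τ₁' ∧ τ₂ = τ₂' ∧ A = A' ∧ ∀ b ∉ A, p b = p' b := by
  apply nfR_inj h1 h2 h3 h4 h1' h2' h3' h4'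
  intro f g
  unfold nfR
  rw [← rho_nf h1 h2 h3 h4, H, rho_nf h1' h2' h3' h4']

end Rep2

section Bij
open Equiv
variable {n : ℕ}

/-- half-diagrams -/
abbrev HD (n : ℕ) := {c : Perm (Fin n) × Finset (Fin n) // c.1 * c.1 = 1 ∧ ∀ x ∉ c.2, c.1 x = x}

/-- diagrams -/
abbrev DG (n : ℕ) := Σ c : HD n × HD n, ({x // x ∉ c.2.1.2} ≃ {x // x ∉ c.1.1.2})

/-- the element of a diagram -/
noncomputable def dgEl (d : DG n) : PBMonoid n :=
  Th d.1.1.1.1 * (sg (d.2.extendSubtype) * (EE d.1.2.1.2 * Th d.1.2.1.1))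

lemma dg_h3 (d : DG n) : ∀ x ∉ d.1.2.1.2, d.1.1.1.1 (d.2.extendSubtype x) = d.2.extendSubtype x := by
  intro x hx
  apply d.1.1.2.2
  rw [d.2.extendSubtype_apply_of_mem x hx]
  exact (d.2 ⟨x, hx⟩).2

lemma dgEl_inj : Function.Injective (dgEl (n := n)) := by
  intro d d' h
  obtain ⟨e1, e2, e3, e4⟩ := nf_inj d.1.1.2.1 d.1.2.2.1 (dg_h3 d) d.1.2.2.2
    d'.1.1.2.1 d'.1.2.2.1 (dg_h3 d') d'.1.2.2.2 h
  obtain ⟨⟨⟨⟨τ₁, A₁⟩, h1⟩, ⟨⟨τ₂, A₂⟩, h2⟩⟩, q⟩ := d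
  obtain ⟨⟨⟨⟨τ₁', A₁'⟩, h1'⟩, ⟨⟨τ₂', A₂'⟩, h2'⟩⟩, q'⟩ := d'
  simp only at e1 e2 e3 e4 q q' h1 h1' h2 h2'
  subst e1 e2 e3
  have e5 : ∀ b (hb : b ∉ A₂), (q ⟨b, hb⟩).1 = (q' ⟨b, hb⟩).1 := by
    intro b hb
    have := e4 b hb
    rwa [q.extendSubtype_apply_of_mem b hb, q'.extendSubtype_apply_of_mem b hb] at this
  have e6 : A₁ = A₁' := by
    ext x
    rw [← not_iff_not]
    constructor
    · intro hx
      have := e5 (q.symm ⟨x, hx⟩).1 (q.symm ⟨x, hx⟩).2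
      rw [Subtype.coe_eta, Equiv.apply_symm_apply] at this
      change x = _ at this
      rw [this]
      exact (q' _).2
    · intro hx
      have := e5 (q'.symm ⟨x, hx⟩).1 (q'.symm ⟨x, hx⟩).2
      rw [Subtype.coe_eta, Equiv.apply_symm_apply] at this
      change _ = x at this
      rw [← this]
      exact (q _).2
  subst e6
  have e7 : q = q' := by
    ext b
    rw [show b = ⟨b.1, b.2⟩ from rfl, e5 b.1 b.2]
  rw [e7]

lemma dgEl_surj : Function.Surjective (dgEl (n := n)) := by
  intro w
  obtain ⟨τ₁, p, A, τ₂, h1, h2, h3, h4, rfl⟩ := nf_all w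
  have hq : ∀ x, x ∉ A ↔ p x ∉ A.map p.toEmbedding := by
    intro x; simp
  let q : {x // x ∉ A} ≃ {x // x ∉ A.map p.toEmbedding} := p.subtypeEquiv hq
  have h3' : ∀ x ∉ A.map p.toEmbedding, τ₁ x = x := by
    intro x hx
    have := h3 (p.symm x) (by rw [hq]; simpa using hx)
    simpa using this
  refine ⟨⟨⟨⟨⟨τ₁, A.map p.toEmbedding⟩, h1, h3'⟩, ⟨⟨τ₂, A⟩, h2, h4⟩⟩, q⟩, ?_⟩
  change Th τ₁ * (sg q.extendSubtype * (EE A * Th τ₂)) = _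
  have : sg q.extendSubtype * EE A = sg p * EE A := by
    have e : (p⁻¹ * q.extendSubtype : Perm (Fin n)) = p⁻¹ * q.extendSubtype := rfl
    have := sg_EE_absorb A (p⁻¹ * q.extendSubtype) (by
      intro x hx
      rw [Perm.mul_apply, q.extendSubtype_apply_of_mem x hx]
      exact p.symm_apply_apply x)
    calc sg q.extendSubtype * EE A = sg (p * (p⁻¹ * q.extendSubtype)) * EE A := by
          rw [mul_inv_cancel_left]
      _ = sg p * EE A := by rw [map_mul, mul_assoc, this]
  rw [← mul_assoc (sg _), this, mul_assoc]

lemma card_PB : Finite (PBMonoid n) ∧ Nat.card (PBMonoid n) =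
    ∑ c₁ : HD n, ∑ c₂ : HD n, if c₁.1.2.card = c₂.1.2.card then (n - c₁.1.2.card).factorial else 0 := by
  have e : DG n ≃ PBMonoid n := Equiv.ofBijective dgEl ⟨dgEl_inj, dgEl_surj⟩
  refine ⟨Finite.of_equiv _ e, ?_⟩
  rw [← Nat.card_congr e, Nat.card_eq_fintype_card, Fintype.card_sigma, Fintype.sum_prod_type]
  refine Finset.sum_congr rfl fun c₁ _ => Finset.sum_congr rfl fun c₂ _ => ?_
  have hc : ∀ A : Finset (Fin n), Fintype.card {x // x ∉ A} = n - A.card := by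
    intro A
    rw [Fintype.card_subtype_compl]; simp
  have hle : ∀ A : Finset (Fin n), A.card ≤ n := fun A => by
    simpa using A.card_le_univ
  split_ifs with h
  · have : Fintype.card {x // x ∉ c₂.1.2} = Fintype.card {x // x ∉ c₁.1.2} := by
      rw [hc, hc, h]
    rw [Fintype.card_equiv (Fintype.equivOfCardEq this), hc, h]
  · rw [Fintype.card_eq_zero_iff]
    refine ⟨fun q => h ?_⟩
    have := Fintype.card_congr q
    rw [hc, hc] at this
    simp only at this
    have := hle c₁.1.2; have := hle c₂.1.2; omega

end Bij

section Count
open Equiv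
variable {n : ℕ}

/-- number of half-diagrams with given statistics -/
def NN (n k s : ℕ) : ℕ :=
  (Finset.univ.filter (fun c : HD n => c.1.1.cycleType.card = k ∧ c.1.2.card = s)).card

lemma hd_cyc {τ : Perm (Fin n)} (k : ℕ) :
    τ.cycleType = Multiset.replicate k 2 ↔ τ * τ = 1 ∧ τ.cycleType.card = k := by
  haveI : Fact (Nat.Prime 2) := ⟨Nat.prime_two⟩
  rw [Multiset.eq_replicate, ← Perm.pow_prime_eq_one_iff, pow_two, and_comm]

lemma hd_supp {τ : Perm (Fin n)} {k : ℕ} (h : τ.cycleType = Multiset.replicate k 2) :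
    τ.support.card = 2 * k := by
  rw [← Perm.sum_cycleType, h, Multiset.sum_replicate]; simp [mul_comm]

lemma supp_sub (τ : Perm (Fin n)) (A : Finset (Fin n)) :
    τ.support ⊆ A ↔ ∀ x ∉ A, τ x = x := by
  constructor
  · intro h x hx
    by_contra hh
    exact hx (h (Perm.mem_support.2 hh))
  · intro h x hx
    by_contra hh
    exact (Perm.mem_support.1 hx) (h x hh)

lemma hd_le (c : HD n) : 2 * c.1.1.cycleType.card ≤ c.1.2.card ∧ c.1.2.card ≤ n := by
  constructor
  · rw [← hd_supp ((hd_cyc _).2 ⟨c.2.1, rfl⟩)]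
    exact Finset.card_le_card ((supp_sub _ _).2 c.2.2)
  · simpa using c.1.2.card_le_univ

lemma NN_zero {k s : ℕ} (h : ¬ (2 * k ≤ s ∧ s ≤ n)) : NN n k s = 0 := by
  unfold NN
  rw [Finset.card_eq_zero, Finset.filter_eq_empty_iff]
  rintro c _ ⟨rfl, rfl⟩
  exact h (hd_le c)

lemma NN_eq {k s : ℕ} (h : 2 * k ≤ s) :
    NN n k s = (Finset.univ.filter (fun τ : Perm (Fin n) => τ.cycleType = Multiset.replicate k 2)).card
      * (n - 2 * k).choose (s - 2 * k) := by
  have e : NN n k s = ((Finset.univ.filter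
      (fun τ : Perm (Fin n) => τ.cycleType = Multiset.replicate k 2)).sigma
      (fun τ => ((Finset.univ : Finset (Fin n)).powersetCard s).filter (τ.support ⊆ ·))).card := by
    unfold NN
    refine Finset.card_bij (fun c _ => ⟨c.1.1, c.1.2⟩) ?_ ?_ ?_
    · intro c hc
      simp only [Finset.mem_filter, Finset.mem_univ, true_and, Finset.mem_sigma,
        Finset.mem_powersetCard, Finset.subset_univ] at hc ⊢
      exact ⟨(hd_cyc k).2 ⟨c.2.1, hc.1⟩, hc.2, (supp_sub _ _).2 c.2.2⟩
    · intro c _ c' _ h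
      apply Subtype.ext
      rw [Sigma.mk.injEq] at h
      exact Prod.ext h.1 (eq_of_heq h.2)
    · rintro ⟨τ, A⟩ hc
      simp only [Finset.mem_filter, Finset.mem_univ, true_and, Finset.mem_sigma,
        Finset.mem_powersetCard, Finset.subset_univ] at hc
      refine ⟨⟨⟨τ, A⟩, ((hd_cyc k).1 hc.1).1, (supp_sub _ _).1 hc.2.2⟩, ?_, rfl⟩
      simp only [Finset.mem_filter, Finset.mem_univ, true_and]
      exact ⟨((hd_cyc k).1 hc.1).2, hc.2.1⟩
  rw [e, Finset.card_sigma, Finset.sum_const_nat (m := (n - 2 * k).choose (s - 2 * k))]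
  intro τ hτ
  have hs := hd_supp (Finset.mem_filter.1 hτ).2
  rw [Finset.card_filter_powersetCard_subset _ _ _ (Finset.subset_univ _) (by rw [hs]; exact h), hs]
  simp

lemma NN_mul {k s : ℕ} (h : 2 * k ≤ s) (hs : s ≤ n) :
    NN n k s * (k.factorial * 2 ^ k * (s - 2 * k).factorial * (n - s).factorial) = n.factorial := by
  have h1 := Perm.card_of_cycleType_mul_eq (α := Fin n) (Multiset.replicate k 2)
  have h2 := Nat.choose_mul_factorial_mul_factorial (n := n - 2 * k) (k := s - 2 * k) (by omega)
  rw [show n - 2 * k - (s - 2 * k) = n - s by omega] at h2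
  have h3 : (∏ x ∈ (Multiset.replicate k 2).toFinset, ((Multiset.replicate k 2).count x).factorial)
      = k.factorial := by
    rcases Nat.eq_zero_or_pos k with rfl | hk
    · simp
    · rw [Multiset.toFinset_replicate, if_neg hk.ne']; simp
  rw [h3, if_pos] at h1
  · rw [NN_eq h]
    simp only [Multiset.sum_replicate, Multiset.prod_replicate, Fintype.card_fin, smul_eq_mul,
      mul_comm k 2] at h1
    rw [← h1, ← h2]
    ring
  · refine ⟨by simp; omega, fun a ha => ?_⟩
    rw [Multiset.eq_of_mem_replicate ha]

lemma hd_group (F : ℕ → ℕ → ℕ) : ∑ c : HD n, F c.1.1.cycleType.card c.1.2.card =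
    ∑ k ∈ Finset.range (n + 1), ∑ s ∈ Finset.range (n + 1), NN n k s * F k s := by
  rw [← Finset.sum_product', ← Finset.sum_fiberwise_of_maps_to
    (s := (Finset.univ : Finset (HD n))) (t := Finset.range (n+1) ×ˢ Finset.range (n+1))
    (g := fun c => (c.1.1.cycleType.card, c.1.2.card))]
  · refine Finset.sum_congr rfl fun x _ => ?_
    rw [Finset.sum_congr rfl (g := fun _ => F x.1 x.2), Finset.sum_const, smul_eq_mul]
    · congr 1
      unfold NN
      congr 1
      ext c
      simp [Prod.ext_iff]
    · intro c hc
      rw [Finset.mem_filter] at hc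
      rw [← hc.2]
  · intro c _
    have := hd_le c
    simp only [Finset.mem_product, Finset.mem_range]
    omega

/-- summand -/
def WW (n k k' s : ℕ) : ℕ :=
  if 2 * k ≤ s ∧ 2 * k' ≤ s ∧ s ≤ n then n.factorial ^ 2 /
    (k.factorial * 2 ^ k * (s - 2 * k).factorial * k'.factorial * 2 ^ k' * (s - 2 * k').factorial *
      (n - s).factorial) else 0

lemma WW_eq (k k' s : ℕ) : NN n k s * NN n k' s * (n - s).factorial = WW n k k' s := by
  unfold WW
  split_ifs with h
  · symm
    apply Nat.div_eq_of_eq_mul_left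
    · positivity
    · have h1 := NN_mul h.1 h.2.2
      have h2 := NN_mul h.2.1 h.2.2
      calc n.factorial ^ 2 = n.factorial * n.factorial := pow_two _
        _ = _ := by
          nth_rw 1 [← h1]
          rw [← h2]
          ring
  · by_cases h1 : 2 * k ≤ s ∧ s ≤ n
    · rw [NN_zero (k := k') (s := s) (by omega)]; simp
    · rw [NN_zero (k := k) h1]; simp

lemma WW_symm (k k' s : ℕ) : WW n k k' s = WW n k' k s := by
  rw [← WW_eq, ← WW_eq, mul_comm (NN n k s)]

lemma card_PB' : Nat.card (PBMonoid n) =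
    ∑ s ∈ Finset.range (n + 1), ∑ k ∈ Finset.range (n + 1), ∑ k' ∈ Finset.range (n + 1),
      WW n k k' s := by
  rw [card_PB.2]
  have e1 : ∀ c₁ : HD n, (∑ c₂ : HD n,
      if c₁.1.2.card = c₂.1.2.card then (n - c₁.1.2.card).factorial else 0) =
      ∑ k' ∈ Finset.range (n + 1), NN n k' c₁.1.2.card * (n - c₁.1.2.card).factorial := by
    intro c₁
    rw [hd_group (fun _ s => if c₁.1.2.card = s then (n - c₁.1.2.card).factorial else 0)]
    refine Finset.sum_congr rfl fun k' _ => ?_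
    have := (hd_le c₁).2
    simp only [mul_ite, mul_zero, Finset.sum_ite_eq, Finset.mem_range]
    rw [if_pos (by omega)]
  simp only [e1]
  rw [hd_group (fun _ s => ∑ k' ∈ Finset.range (n + 1), NN n k' s * (n - s).factorial),
    Finset.sum_comm]
  refine Finset.sum_congr rfl fun s _ => Finset.sum_congr rfl fun k _ => ?_
  rw [Finset.mul_sum]
  refine Finset.sum_congr rfl fun k' _ => ?_
  rw [← WW_eq, mul_assoc]

lemma sum_shift (N i : ℕ) (g : ℕ → ℕ) (hg : ∀ j, N ≤ j → g j = 0) :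
    ∑ m ∈ Finset.range N, g (i + m) = ∑ j ∈ Finset.range N, if i ≤ j then g j else 0 := by
  have e : ∑ j ∈ Finset.range N, (if i ≤ j then g j else 0) =
      ∑ j ∈ Finset.range (i + N), if i ≤ j then g j else 0 := by
    apply Finset.sum_subset
    · intro x; simp only [Finset.mem_range]; omega
    · intro x _ hx
      rw [Finset.mem_range, not_lt] at hx
      rw [hg x hx]; simp
  have z : ∑ j ∈ Finset.range i, (if i ≤ j then g j else 0) = 0 := by
    apply Finset.sum_eq_zero
    intro x hx
    rw [Finset.mem_range] at hx
    rw [if_neg (by omega)]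
  rw [e, Finset.sum_range_add, z, zero_add]
  simp

lemma sum_sym (N : ℕ) (f : ℕ → ℕ → ℕ) (hs : ∀ i j, f i j = f j i) (h0 : ∀ i j, N ≤ j → f i j = 0) :
    ∑ i ∈ Finset.range N, ∑ j ∈ Finset.range N, f i j =
    ∑ i ∈ Finset.range N, ∑ m ∈ Finset.range N, (if m = 0 then 1 else 2) * f i (i + m) := by
  have e1 : ∀ i, ∑ m ∈ Finset.range N, (if m = 0 then 1 else 2) * f i (i + m) =
      (∑ j ∈ Finset.range N, if i ≤ j then f i j else 0) +
      ∑ j ∈ Finset.range N, if i < j then f i j else 0 := by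
    intro i
    have a := sum_shift N i (fun j => f i j) (h0 i)
    have b := sum_shift N i (fun j => if i < j then f i j else 0)
      (fun j hj => by simp [h0 i j hj])
    have c : ∀ j, (if i ≤ j then (if i < j then f i j else 0) else 0) = if i < j then f i j else 0 := by
      intro j; split_ifs <;> first | rfl | omega
    simp only [c] at b
    rw [← a, ← b, ← Finset.sum_add_distrib]
    refine Finset.sum_congr rfl fun m _ => ?_
    rcases Nat.eq_zero_or_pos m with rfl | hm
    · simp
    · rw [if_neg hm.ne', if_pos (by omega)]; ring
  simp only [e1]
  rw [Finset.sum_add_distrib]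
  have e2 : ∑ i ∈ Finset.range N, ∑ j ∈ Finset.range N, (if i < j then f i j else 0) =
      ∑ i ∈ Finset.range N, ∑ j ∈ Finset.range N, (if j < i then f i j else 0) := by
    rw [Finset.sum_comm]
    refine Finset.sum_congr rfl fun i _ => Finset.sum_congr rfl fun j _ => ?_
    rw [hs]
  rw [e2, ← Finset.sum_add_distrib]
  refine Finset.sum_congr rfl fun i _ => ?_
  rw [← Finset.sum_add_distrib]
  refine Finset.sum_congr rfl fun j _ => ?_
  split_ifs <;> omega

lemma card_PB'' (n : ℕ) : Nat.card (PBMonoid n) =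
        ∑ k ∈ Finset.range (n + 1), ∑ m ∈ Finset.range (n + 1), ∑ t ∈ Finset.range (n + 1),
          if 2 * k + 2 * m + t ≤ n then
            (if m = 0 then 1 else 2) *
              (n.factorial ^ 2 /
                (k.factorial * 2 ^ k * (t + 2 * m).factorial * (k + m).factorial *
                  2 ^ (k + m) * t.factorial * (n - 2 * k - 2 * m - t).factorial))
          else 0 := by
  rw [card_PB']
  have e : ∀ s ∈ Finset.range (n+1), _ := fun s hs => sum_sym (n+1) (fun k k' => WW n k k' s)
    (fun k k' => WW_symm k k' s) (fun k k' hk => by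
      unfold WW; rw [if_neg]; rw [Finset.mem_range] at hs; omega)
  rw [Finset.sum_congr rfl e, Finset.sum_comm]
  refine Finset.sum_congr rfl fun k _ => ?_
  rw [Finset.sum_comm]
  refine Finset.sum_congr rfl fun m _ => ?_
  generalize (if m = 0 then 1 else 2) = c
  have z : ∀ s, ¬ (2 * k + 2 * m ≤ s ∧ s ≤ n) → WW n k (k + m) s = 0 := by
    intro s hs; unfold WW; rw [if_neg (by omega)]
  have a := sum_shift (n+1) (2 * k + 2 * m)
    (fun s => c * WW n k (k + m) s) (fun s hs => by rw [z s (by omega), mul_zero])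
  have b : ∀ s, (if 2 * k + 2 * m ≤ s then c * WW n k (k + m) s else 0) =
      c * WW n k (k + m) s := by
    intro s
    split_ifs with h
    · rfl
    · rw [z s (by omega), mul_zero]
  simp only [b] at a
  rw [← a]
  refine Finset.sum_congr rfl fun t _ => ?_
  by_cases h : 2 * k + 2 * m + t ≤ n
  · rw [if_pos h]
    unfold WW
    rw [if_pos (by omega)]
    rw [show 2 * k + 2 * m + t - 2 * k = t + 2 * m by omega,
      show 2 * k + 2 * m + t - 2 * (k + m) = t by omega,
      show n - (2 * k + 2 * m + t) = n - 2 * k - 2 * m - t by omega]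
  · rw [z _ (by omega), if_neg h, mul_zero]

end Count

/-- Theorem 3 of Kudryavtseva–Mazorchuk, in cardinality form: the monoid `T` is finite
and its cardinality equals
`Σ_{2k+2m+t ≤ n} c(m) (n!)² / (k! 2^k (t+2m)! (k+m)! 2^{k+m} t! (n-2k-2m-t)!)`,
where `c(m) = 1` if `m = 0` and `c(m) = 2` otherwise — the cardinality of the partial
Brauer monoid `P𝔅_n` (to which `T` is isomorphic via `σ_i ↦ s_i`, `θ_i ↦ π_i`,
`ϑ_i ↦ ς_i`). -/
theorem PB_card_eq (n : ℕ) (hn : 1 ≤ n) :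
    Finite (PBMonoid n) ∧
      Nat.card (PBMonoid n) =
        ∑ k ∈ Finset.range (n + 1), ∑ m ∈ Finset.range (n + 1), ∑ t ∈ Finset.range (n + 1),
          if 2 * k + 2 * m + t ≤ n then
            (if m = 0 then 1 else 2) *
              (n.factorial ^ 2 /
                (k.factorial * 2 ^ k * (t + 2 * m).factorial * (k + m).factorial *
                  2 ^ (k + m) * t.factorial * (n - 2 * k - 2 * m - t).factorial))
          else 0 := by
  exact ⟨card_PB.1, card_PB'' n⟩
end
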